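/- arXiv:2010.04113 — 2 statements merged into one kernel-verified Lean document; each statement's English description precedes it below -/
import Mathlib

section
/- Fix an integer r ≥ 1. Then R̃_4(rK_2; 5r − 3) ≤ 7r − 5. Equivalently: Builder has a strategy that, playing on K_{5r−3} with 4 colors, guarantees within 7r − 5 moves that some color class contains r pairwise disjoint edges, against every Painter strategy. -/
open Finset

/-- Two edges of a complete graph (elements of `Sym2 (Fin n)`) are disjoint if they
share no vertex. -/
def EdgeDisjoint {n : ℕ} (e f : Sym2 (Fin n)) : Prop := ∀ v, v ∈ e → v ∉ f

/-- A finite set of elements of `Sym2 (Fin n)` is a matching if each element is a genuine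
(non-loop) edge and the edges are pairwise disjoint. -/
def IsMatchingIn {n : ℕ} (M : Finset (Sym2 (Fin n))) : Prop :=
  (∀ e ∈ M, ¬ e.IsDiag) ∧ (M : Set (Sym2 (Fin n))).Pairwise EdgeDisjoint

/-- A history of the online Ramsey game on `K_n` with `t` colours: the list of
edges played so far, each together with the colour Painter gave it. -/
abbrev GameHistory (n t : ℕ) := List (Sym2 (Fin n) × Fin t)

/-- A Builder strategy: given the history so far, select the next edge. -/
abbrev BuilderStrategy (n t : ℕ) := GameHistory n t → Sym2 (Fin n)

/-- A Painter strategy: given the history so far and the newly selected edge,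
choose a colour for it. -/
abbrev PainterStrategy (n t : ℕ) := GameHistory n t → Sym2 (Fin n) → Fin t

/-- The history after `k` moves when Builder plays strategy `B` against Painter
strategy `P`. -/
def gamePlay {n t : ℕ} (B : BuilderStrategy n t) (P : PainterStrategy n t) :
    ℕ → GameHistory n t
  | 0 => []
  | k + 1 =>
      let h := gamePlay B P k
      h ++ [(B h, P h (B h))]

/-- Builder plays legally for the first `k` moves against `P`: every selected edge
is a genuine (non-loop) edge not selected before. -/
def BuilderValid {n t : ℕ} (B : BuilderStrategy n t) (P : PainterStrategy n t)
    (k : ℕ) : Prop :=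
  ∀ j < k, ¬ (B (gamePlay B P j)).IsDiag ∧
    B (gamePlay B P j) ∉ (gamePlay B P j).map Prod.fst

/-- The history `h` contains, for some colour `i`, a matching of `r i` edges all
coloured `i`. -/
def HistoryHasMatching (n t : ℕ) (r : Fin t → ℕ) (h : GameHistory n t) : Prop :=
  ∃ i : Fin t, ∃ M : Finset (Sym2 (Fin n)),
    M.card = r i ∧ IsMatchingIn M ∧ ∀ e ∈ M, (e, i) ∈ h

/-- Builder can force, within `k` legal moves on `K_n` with `t` colours, some colour
`i` to contain a matching of `r i` edges, against every Painter strategy. -/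
def BuilderWinsIn (n t : ℕ) (r : Fin t → ℕ) (k : ℕ) : Prop :=
  ∃ B : BuilderStrategy n t, (∀ P : PainterStrategy n t, BuilderValid B P k) ∧
    ∀ P : PainterStrategy n t, HistoryHasMatching n t r (gamePlay B P k)

/-- The restricted online Ramsey number `R̃(r₁K₂,…,r_tK₂; n)`: the least `k` such
that Builder can force a win within `k` moves. -/
noncomputable def restrictedOnlineRamsey (n t : ℕ) (r : Fin t → ℕ) : ℕ :=
  sInf {k | BuilderWinsIn n t r k}

/-- A colouring `c` of (the edges of) `K_N` with `t` colours contains, for some colour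
`i`, a matching of `r i` edges all coloured `i`. -/
def ColoringHasMatching (N t : ℕ) (r : Fin t → ℕ) (c : Sym2 (Fin N) → Fin t) : Prop :=
  ∃ i : Fin t, ∃ M : Finset (Sym2 (Fin N)),
    M.card = r i ∧ IsMatchingIn M ∧ ∀ e ∈ M, c e = i

/-- The classical Ramsey number `R(r₁K₂,…,r_tK₂)`: the least `N` such that every
`t`-colouring of the edges of `K_N` contains, for some `i`, a matching of `r i`
edges in colour `i`. -/
noncomputable def matchingRamsey (t : ℕ) (r : Fin t → ℕ) : ℕ :=
  sInf {N | ∀ c : Sym2 (Fin N) → Fin t, ColoringHasMatching N t r c}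

namespace RamseyAux

variable {n : ℕ}

/-- Builder can force a matching in exactly `k` further legal moves from `h`. -/
def Force (n r : ℕ) : ℕ → GameHistory n 4 → Prop
  | 0, h => HistoryHasMatching n 4 (fun _ => r) h
  | k + 1, h => ∃ e : Sym2 (Fin n), ¬ e.IsDiag ∧ e ∉ h.map Prod.fst ∧
      ∀ c : Fin 4, Force n r k (h ++ [(e, c)])

lemma exists_new (h : GameHistory n 4) (hl : h.length < n.choose 2) :
    ∃ e : Sym2 (Fin n), ¬ e.IsDiag ∧ e ∉ h.map Prod.fst := by
  classical
  by_contra! hc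
  have h1 : (Finset.univ.filter fun e : Sym2 (Fin n) => ¬ e.IsDiag) ⊆
      (h.map Prod.fst).toFinset := by
    intro e he
    simp only [Finset.mem_filter, Finset.mem_univ, true_and] at he
    exact List.mem_toFinset.2 (hc e he)
  have h2 := Finset.card_le_card h1
  have h3 := List.toFinset_card_le (h.map Prod.fst)
  have h4 := Sym2.card_subtype_not_diag (α := Fin n)
  rw [Fintype.card_subtype] at h4
  simp only [Fintype.card_fin, List.length_map] at h3 h4
  omega

lemma HistoryHasMatching.mono {r : Fin 4 → ℕ} {h h' : GameHistory n 4} (hs : h ⊆ h')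
    (hm : HistoryHasMatching n 4 r h) : HistoryHasMatching n 4 r h' := by
  obtain ⟨i, M, h1, h2, h3⟩ := hm
  exact ⟨i, M, h1, h2, fun e he => hs (h3 e he)⟩

lemma pad {r : ℕ} (k : ℕ) (h : GameHistory n 4)
    (hm : HistoryHasMatching n 4 (fun _ => r) h) (hk : k = 0 ∨ h.length + k ≤ n.choose 2) :
    Force n r k h := by
  induction k generalizing h with
  | zero => exact hm
  | succ k ih =>
    obtain ⟨e, he1, he2⟩ := exists_new h (by omega)
    refine ⟨e, he1, he2, fun c => ih _ (HistoryHasMatching.mono (by simp) hm) ?_⟩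
    simp; omega

/-- Builder wins from `h` when the total number of moves is `K`. -/
def Good (n r K : ℕ) (h : GameHistory n 4) : Prop := Force n r (K - h.length) h

lemma ask {r K : ℕ} {h : GameHistory n 4} (u v : Fin n) (huv : u ≠ v) (q : ℕ)
    (hq : h.length ≤ q) (hK : q < K)
    (H : ∀ c h', h ⊆ h' → (s(u, v), c) ∈ h' → h'.length ≤ q + 1 → Good n r K h') :
    Good n r K h := by
  by_cases hin : s(u, v) ∈ h.map Prod.fst
  · obtain ⟨⟨e, c⟩, h1, h2⟩ := List.mem_map.1 hin
    simp only at h2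
    subst h2
    exact H c h (fun _ hx => hx) h1 (by omega)
  · have : K - h.length = (K - (h.length + 1)) + 1 := by omega
    unfold Good
    rw [this]
    refine ⟨s(u, v), by simpa using huv, hin, fun c => ?_⟩
    have := H c (h ++ [(s(u, v), c)]) (by simp) (by simp) (by simp; omega)
    simpa [Good] using this

lemma builderWins {r K : ℕ} [Nonempty (Sym2 (Fin n))] (hF : Force n r K []) :
    BuilderWinsIn n 4 (fun _ => r) K := by
  classical
  let Q : GameHistory n 4 → Sym2 (Fin n) → Prop := fun h e =>
    ¬ e.IsDiag ∧ e ∉ h.map Prod.fst ∧ ∀ c : Fin 4, Force n r (K - (h.length + 1)) (h ++ [(e, c)])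
  let B : BuilderStrategy n 4 := fun h => Classical.epsilon (Q h)
  have hQ : ∀ h, h.length < K → Force n r (K - h.length) h → Q h (B h) := by
    intro h hl hf
    have : K - h.length = (K - (h.length + 1)) + 1 := by omega
    rw [this] at hf
    exact Classical.epsilon_spec (p := Q h) hf
  have key : ∀ P : PainterStrategy n 4, ∀ j ≤ K, (gamePlay B P j).length = j ∧
      Force n r (K - j) (gamePlay B P j) := by
    intro P j
    induction j with
    | zero => intro _; exact ⟨rfl, hF⟩
    | succ j ih =>
      intro hj
      obtain ⟨h1, h2⟩ := ih (by omega)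
      have h3 := hQ (gamePlay B P j) (by omega) (by rw [h1]; exact h2)
      refine ⟨by simp [gamePlay, h1], ?_⟩
      have := h3.2.2 (P (gamePlay B P j) (B (gamePlay B P j)))
      rw [h1] at this
      exact this
  refine ⟨B, fun P j hj => ?_, fun P => ?_⟩
  · obtain ⟨h1, h2⟩ := key P j (by omega)
    have h3 := hQ (gamePlay B P j) (by omega) (by rw [h1]; exact h2)
    exact ⟨h3.1, h3.2.1⟩
  · have := (key P K le_rfl).2
    rw [Nat.sub_self] at this
    exact this

/-- Pieces of Builder's structure: full sets, two-coloured cherries, single edges. -/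
inductive Piece (n : ℕ) where
  | F (l : List (Fin n)) : Piece n
  | V (x y : Fin 4) (u v w : Fin n) : Piece n
  | E (x : Fin 4) (u v : Fin n) : Piece n

open Piece

def verts : Piece n → List (Fin n)
  | F l => l
  | V _ _ u v w => [u, v, w]
  | E _ u v => [u, v]

def valid (h : GameHistory n 4) : Piece n → Prop
  | F l => l.length ≤ 5 ∧ ∀ c : Fin 4, ∃ u ∈ l, ∃ v ∈ l, u ≠ v ∧ (s(u, v), c) ∈ h
  | V x y u v w => x ≠ y ∧ (s(u, v), x) ∈ h ∧ (s(v, w), y) ∈ h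
  | E x u v => (s(u, v), x) ∈ h

def pot : Piece n → ℕ
  | F _ => 7
  | V _ _ _ _ _ => 3
  | E _ _ _ => 1

def phi (L : List (Piece n)) : ℕ := (L.map pot).sum

def flat (L : List (Piece n)) : List (Fin n) := L.flatMap verts

def based (a : Fin 4) : Piece n → Prop
  | V x y _ _ _ => x = a ∨ y = a
  | _ => True

/-- The pieces are vertex disjoint and valid. -/
def Pre (h : GameHistory n 4) (L : List (Piece n)) : Prop :=
  (flat L).Nodup ∧ ∀ k ∈ L, valid h k

lemma valid.mono {h h' : GameHistory n 4} (hs : h ⊆ h') {k : Piece n} (hv : valid h k) :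
    valid h' k := by
  cases k with
  | F l =>
    refine ⟨hv.1, fun c => ?_⟩
    obtain ⟨u, hu, v, hv, h1, h2⟩ := hv.2 c
    exact ⟨u, hu, v, hv, h1, hs h2⟩
  | V x y u v w => exact ⟨hv.1, hs hv.2.1, hs hv.2.2⟩
  | E x u v => exact hs hv

lemma Pre.mono {h h' : GameHistory n 4} (hs : h ⊆ h') {L : List (Piece n)} (hp : Pre h L) :
    Pre h' L := ⟨hp.1, fun k hk => (hp.2 k hk).mono hs⟩

lemma Pre.perm {h : GameHistory n 4} {L L' : List (Piece n)} (hp : Pre h L) (hs : L.Perm L') :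
    Pre h L' :=
  ⟨((hs.flatMap_right verts).nodup_iff).1 hp.1, fun k hk => hp.2 k (hs.mem_iff.2 hk)⟩

lemma phi_perm {L L' : List (Piece n)} (hs : L.Perm L') : phi L = phi L' :=
  (hs.map pot).sum_eq

/-- Replace a group of pieces by another on a subset of the vertices. -/
lemma Pre.replace {h h' : GameHistory n 4} {A A' R : List (Piece n)} (hp : Pre h (A ++ R))
    (hs : h ⊆ h') (hnd : (flat A').Nodup) (hsub : flat A' ⊆ flat A)
    (hv : ∀ k ∈ A', valid h' k) : Pre h' (A' ++ R) := by
  obtain ⟨h1, h2⟩ := hp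
  simp only [flat, List.flatMap_append] at h1 hnd hsub ⊢
  refine ⟨?_, ?_⟩
  · simp only [flat, List.flatMap_append]
    rw [List.nodup_append] at h1 ⊢
    exact ⟨hnd, h1.2.1, fun a ha b hb => h1.2.2 a (hsub ha) b hb⟩
  · intro k hk
    rcases List.mem_append.1 hk with hk | hk
    · exact hv k hk
    · exact (h2 k (List.mem_append_right _ hk)).mono hs

lemma phi_append (A B : List (Piece n)) : phi (A ++ B) = phi A + phi B := by
  simp [phi]

/-- Inductive hypothesis: all states of larger potential are won. -/
def IH (n r K p : ℕ) : Prop :=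
  ∀ (h : GameHistory n 4) (L : List (Piece n)) (a : Fin 4), p < phi L → h.length ≤ phi L →
    Pre h L → (∀ k ∈ L, based a k) → Good n r K h

lemma step_join {r K p : ℕ} (hI : IH n r K p) {h : GameHistory n 4} {R : List (Piece n)}
    {b a x y z : Fin 4} {u v w l m o : Fin n}
    (hall : ∀ c : Fin 4, c = a ∨ c = x ∨ c = y ∨ c = z)
    (hp : Pre h ([V a x u v w, V y z l m o] ++ R)) (hb : ∀ k ∈ R, based b k)
    (hphi : p < phi R + 7) (hl : h.length ≤ phi R + 6) (hK : phi R + 6 < K) :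
    Good n r K h := by
  have hnd := (List.nodup_append.1 (by simpa only [flat, List.flatMap_append] using hp.1)).1
  have v1 := hp.2 (V a x u v w) (by simp)
  have v2 := hp.2 (V y z l m o) (by simp)
  simp [verts] at hnd
  refine ask v m (by grind) _ hl hK ?_
  intro c h' hs hc hl'
  obtain ⟨v11, v12, v13⟩ := v1.mono hs
  obtain ⟨v21, v22, v23⟩ := v2.mono hs
  have fin : ∀ S : List (Fin n), S.Nodup → S ⊆ [u, v, w, l, m, o] → S.length ≤ 5 →
      (∀ c : Fin 4, ∃ u ∈ S, ∃ v ∈ S, u ≠ v ∧ (s(u, v), c) ∈ h') → Good n r K h' := by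
    intro S hS hsub hlen hc
    refine hI h' ([F S] ++ R) b ?_ ?_ (hp.replace hs ?_ ?_ ?_) ?_
    · simp [phi, pot] at *; omega
    · simp [phi, pot] at *; omega
    · simpa [flat, verts] using hS
    · simpa [flat, verts] using hsub
    · simpa [valid] using ⟨hlen, hc⟩
    · simpa [based] using hb
  rcases hall c with rfl | rfl | rfl | rfl
  · refine fin [v, w, l, m, o] (by grind) (by grind) (by simp) fun d => ?_
    rcases hall d with rfl | rfl | rfl | rfl
    · exact ⟨v, by simp, m, by simp, by grind, hc⟩
    · exact ⟨v, by simp, w, by simp, by grind, v13⟩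
    · exact ⟨l, by simp, m, by simp, by grind, v22⟩
    · exact ⟨m, by simp, o, by simp, by grind, v23⟩
  · refine fin [v, u, l, m, o] (by grind) (by grind) (by simp) fun d => ?_
    rcases hall d with rfl | rfl | rfl | rfl
    · exact ⟨u, by simp, v, by simp, by grind, v12⟩
    · exact ⟨v, by simp, m, by simp, by grind, hc⟩
    · exact ⟨l, by simp, m, by simp, by grind, v22⟩
    · exact ⟨m, by simp, o, by simp, by grind, v23⟩
  · refine fin [u, v, w, m, o] (by grind) (by grind) (by simp) fun d => ?_
    rcases hall d with rfl | rfl | rfl | rfl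
    · exact ⟨u, by simp, v, by simp, by grind, v12⟩
    · exact ⟨v, by simp, w, by simp, by grind, v13⟩
    · exact ⟨v, by simp, m, by simp, by grind, hc⟩
    · exact ⟨m, by simp, o, by simp, by grind, v23⟩
  · refine fin [u, v, w, l, m] (by grind) (by grind) (by simp) fun d => ?_
    rcases hall d with rfl | rfl | rfl | rfl
    · exact ⟨u, by simp, v, by simp, by grind, v12⟩
    · exact ⟨v, by simp, w, by simp, by grind, v13⟩
    · exact ⟨l, by simp, m, by simp, by grind, v22⟩
    · exact ⟨v, by simp, m, by simp, by grind, hc⟩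

lemma step_link {r K p : ℕ} (hI : IH n r K p) {h : GameHistory n 4} {R : List (Piece n)}
    {a x : Fin 4} {u v z t : Fin n} (hax : a ≠ x)
    (hp : Pre h ([E a u v, E x z t] ++ R)) (hb : ∀ k ∈ R, based a k)
    (hphi : p < phi R + 3) (hl : h.length ≤ phi R + 2) (hK : phi R + 2 < K) :
    Good n r K h := by
  have hnd := (List.nodup_append.1 (by simpa only [flat, List.flatMap_append] using hp.1)).1
  have v1 := hp.2 (E a u v) (by simp)
  have v2 := hp.2 (E x z t) (by simp)
  simp [verts] at hnd
  refine ask v z (by grind) _ hl hK ?_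
  intro c h' hs hc hl'
  have v1 := v1.mono hs
  have v2 := v2.mono hs
  by_cases hca : c = a
  · subst hca
    refine hI h' ([V c x v z t] ++ R) c ?_ ?_ (hp.replace hs ?_ ?_ ?_) ?_
    · simp [phi, pot] at *; omega
    · simp [phi, pot] at *; omega
    · simp [flat, verts]; grind
    · simp [flat, verts]
    · simpa [valid] using ⟨hax, hc, v2⟩
    · simpa [based] using hb
  · refine hI h' ([V a c u v z] ++ R) a ?_ ?_ (hp.replace hs ?_ ?_ ?_) ?_
    · simp [phi, pot] at *; omega
    · simp [phi, pot] at *; omega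
    · simp [flat, verts]; grind
    · simp [flat, verts]
    · simpa [valid] using ⟨Ne.symm hca, v1, hc⟩
    · simpa [based] using hb

lemma Pre.flip {h : GameHistory n 4} {R : List (Piece n)} {x y : Fin 4} {u v w : Fin n}
    (hp : Pre h ([V x y u v w] ++ R)) : Pre h ([V y x w v u] ++ R) := by
  have v1 := hp.2 (V x y u v w) (by simp)
  have hnd := (List.nodup_append.1 (by simpa only [flat, List.flatMap_append] using hp.1)).1
  simp [verts] at hnd
  refine hp.replace (fun _ hx => hx) ?_ ?_ ?_
  · simp [flat, verts]; grind
  · simp [flat, verts]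
  · obtain ⟨h1, h2, h3⟩ := v1
    simpa [valid] using ⟨h1.symm, by rwa [Sym2.eq_swap], by rwa [Sym2.eq_swap]⟩

lemma perm_aux {α : Type*} (X Y Z : α) (s t : List α) :
    ([X, Y] ++ (s ++ Z :: t)).Perm ([Z, Y] ++ ([X] ++ (s ++ t))) := by
  have h1 : ([X, Y] ++ (s ++ Z :: t)).Perm (Z :: X :: Y :: (s ++ t)) := by
    simpa using (List.perm_middle (a := Z) (l₁ := X :: Y :: s) (l₂ := t))
  exact h1.trans ((List.Perm.swap Y X (s ++ t)).cons Z)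

lemma step_two {r K p : ℕ} (hI : IH n r K p) {h : GameHistory n 4} {R : List (Piece n)}
    {a x y z : Fin 4} {u v w l m f g : Fin n}
    (hall : ∀ c : Fin 4, c = a ∨ c = x ∨ c = y ∨ c = z)
    (hay : a ≠ y) (hxy : x ≠ y) (hxz : x ≠ z) (hyz : y ≠ z)
    (hp : Pre h ([V a x u v w, E y l m, E z f g] ++ R)) (hb : ∀ k ∈ R, based a k)
    (hphi : p < phi R + 6) (hl : h.length ≤ phi R + 5) (hK : phi R + 6 < K) :
    Good n r K h := by
  have hnd := (List.nodup_append.1 (by simpa only [flat, List.flatMap_append] using hp.1)).1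
  have v1 := hp.2 (V a x u v w) (by simp)
  have v2 := hp.2 (E y l m) (by simp)
  have v3 := hp.2 (E z f g) (by simp)
  simp [verts] at hnd
  refine ask m f (by grind) _ hl (by omega) ?_
  intro c h' hs hc hl'
  have v1 := v1.mono hs
  have v2 := v2.mono hs
  have v3 := v3.mono hs
  rcases hall c with rfl | rfl | rfl | rfl
  · refine hI h' ([V c x u v w, V y c l m f] ++ R) c ?_ ?_ (hp.replace hs ?_ ?_ ?_) ?_
    · simp [phi, pot] at *; omega
    · simp [phi, pot] at *; omega
    · simp [flat, verts]; grind
    · simp [flat, verts]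
    · simp only [List.mem_cons, List.not_mem_nil, or_false, forall_eq_or_imp, forall_eq]
      exact ⟨v1, hay.symm, v2, hc⟩
    · simpa [based] using hb
  · -- the answer is the second colour of the cherry
    have hp1 : Pre h' ([V a c u v w, V c z m f g] ++ R) := by
      refine hp.replace hs ?_ ?_ ?_
      · simp [flat, verts]; grind
      · simp [flat, verts]
      · simp only [List.mem_cons, List.not_mem_nil, or_false, forall_eq_or_imp, forall_eq]
        exact ⟨v1, hxz, hc, v3⟩
    have hp2 : Pre h' ([V a c u v w, V y c l m f] ++ R) := by
      refine hp.replace hs ?_ ?_ ?_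
      · simp [flat, verts]; grind
      · simp [flat, verts]
      · simp only [List.mem_cons, List.not_mem_nil, or_false, forall_eq_or_imp, forall_eq]
        exact ⟨v1, hxy.symm, v2, hc⟩
    by_cases hbc : ∀ k ∈ R, based c k
    · refine hI h' _ c ?_ ?_ hp1 ?_
      · simp [phi, pot] at *; omega
      · simp [phi, pot] at *; omega
      · simpa [based] using hbc
    · push Not at hbc
      obtain ⟨k, hk, hkc⟩ := hbc
      have hka := hb k hk
      have hkv := hp1.2 k (by simp [hk])
      obtain ⟨s, t, rfl⟩ := List.append_of_mem hk
      -- orient the cherry `k`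
      have main : ∀ (d : Fin 4) (i j o : Fin n), d ≠ c → d ≠ a →
          (∀ A : List (Piece n), Pre h' (A ++ (s ++ k :: t)) →
            Pre h' (A ++ (s ++ V a d i j o :: t))) → pot k = 3 → Good n r K h' := by
        intro d i j o hdc hda hA hpk
        have hph : phi (s ++ k :: t) = phi ([V a c u v w] ++ (s ++ t)) := by
          simp only [phi, List.map_append, List.map_cons, List.map_nil, List.sum_append,
            List.sum_cons, List.sum_nil, hpk]
          simp only [pot]; omega
        have hbR : ∀ k' ∈ [V a c u v w] ++ (s ++ t), based a k' := by
          simp only [List.mem_append, List.mem_singleton]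
          rintro k' (rfl | h1 | h1)
          · simp [based]
          · exact hb k' (by simp [h1])
          · exact hb k' (by simp [h1])
        rw [hph] at hphi hl' hK
        have hd : d = y ∨ d = z := by
          rcases hall d with h1 | h1 | h1 | h1
          · exact absurd h1 hda
          · exact absurd h1 hdc
          · exact Or.inl h1
          · exact Or.inr h1
        rcases hd with rfl | rfl
        · refine step_join hI (b := a) (R := [V a c u v w] ++ (s ++ t)) (a := a) (x := d) (y := c)
            (z := z) (u := i) (v := j) (w := o) (l := m) (m := f) (o := g) ?_ ?_ hbR
            (by omega) (by omega) hK
          · intro c'; rcases hall c' with h1 | h1 | h1 | h1 <;> simp [h1]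
          · refine (hA _ hp1).perm ?_
            exact perm_aux _ _ _ _ _
        · refine step_join hI (b := a) (R := [V a c u v w] ++ (s ++ t)) (a := a) (x := d) (y := y)
            (z := c) (u := i) (v := j) (w := o) (l := l) (m := m) (o := f) ?_ ?_ hbR
            (by omega) (by omega) hK
          · intro c'; rcases hall c' with h1 | h1 | h1 | h1 <;> simp [h1]
          · refine (hA _ hp2).perm ?_
            exact perm_aux _ _ _ _ _
      cases k with
      | F l => simp [based] at hkc
      | E x u v => simp [based] at hkc
      | V x1 x2 i j o =>
        simp only [based] at hka hkc
        push Not at hkc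
        rcases hka with rfl | rfl
        · exact main x2 i j o hkc.2 hkv.1.symm (fun A hA => hA) rfl
        · refine main x1 o j i hkc.1 hkv.1 (fun A hA => ?_) rfl
          have q1 : (A ++ (s ++ V x1 x2 i j o :: t)).Perm ([V x1 x2 i j o] ++ (A ++ (s ++ t))) := by
            simpa using (List.perm_middle (l₁ := A ++ s) (l₂ := t))
          have q2 : (A ++ (s ++ V x2 x1 o j i :: t)).Perm ([V x2 x1 o j i] ++ (A ++ (s ++ t))) := by
            simpa using (List.perm_middle (l₁ := A ++ s) (l₂ := t))
          exact ((hA.perm q1).flip).perm q2.symm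
  · have hp1 : Pre h' ([V a x u v w, V c z m f g] ++ R) := by
      refine hp.replace hs ?_ ?_ ?_
      · simp [flat, verts]; grind
      · simp [flat, verts]
      · simp only [List.mem_cons, List.not_mem_nil, or_false, forall_eq_or_imp, forall_eq]
        exact ⟨v1, hyz, hc, v3⟩
    exact step_join hI hall hp1 hb (by omega) (by omega) hK
  · have hp1 : Pre h' ([V a x u v w, V y c l m f] ++ R) := by
      refine hp.replace hs ?_ ?_ ?_
      · simp [flat, verts]; grind
      · simp [flat, verts]
      · simp only [List.mem_cons, List.not_mem_nil, or_false, forall_eq_or_imp, forall_eq]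
        exact ⟨v1, hyz, v2, hc⟩
    exact step_join hI hall hp1 hb (by omega) (by omega) hK



def has (i : Fin 4) : Piece n → ℕ
  | F _ => 1
  | V x y _ _ _ => if x = i ∨ y = i then 1 else 0
  | E x _ _ => if x = i then 1 else 0

def isF : Piece n → ℕ
  | F _ => 1
  | _ => 0

def isV (i : Fin 4) : Piece n → ℕ
  | V x y _ _ _ => if x = i ∨ y = i then 1 else 0
  | _ => 0

def isE (i : Fin 4) : Piece n → ℕ
  | E x _ _ => if x = i then 1 else 0
  | _ => 0

def tot (f : Piece n → ℕ) (L : List (Piece n)) : ℕ := (L.map f).sum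

lemma tot_pos {f : Piece n → ℕ} {L : List (Piece n)} (h : 0 < tot f L) : ∃ k ∈ L, 0 < f k := by
  by_contra! hc
  have : tot f L = 0 := by
    unfold tot
    rw [List.sum_eq_zero]
    intro x hx
    obtain ⟨k, hk, rfl⟩ := List.mem_map.1 hx
    have := hc k hk
    omega
  omega

lemma tot_has (i : Fin 4) (L : List (Piece n)) :
    tot (has i) L = tot isF L + tot (isV i) L + tot (isE i) L := by
  induction L with
  | nil => rfl
  | cons k L ih =>
    have : has i k = isF k + isV i k + isE i k := by
      cases k <;> simp [has, isF, isV, isE]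
    simp only [tot, List.map_cons, List.sum_cons] at ih ⊢
    omega

lemma tot_V {h : GameHistory n 4} {a b c d : Fin 4} {L : List (Piece n)}
    (hall : ∀ i : Fin 4, i = a ∨ i = b ∨ i = c ∨ i = d)
    (hab : a ≠ b) (hac : a ≠ c) (had : a ≠ d) (hbc : b ≠ c) (hbd : b ≠ d) (hcd : c ≠ d)
    (hv : ∀ k ∈ L, valid h k) (hb : ∀ k ∈ L, based a k) :
    tot (isV a) L = tot (isV b) L + tot (isV c) L + tot (isV d) L ∧
    phi L = 7 * tot isF L + 3 * tot (isV a) L + tot (isE a) L + tot (isE b) L + tot (isE c) L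
      + tot (isE d) L ∧
    (flat L).length ≤ 5 * tot isF L + 3 * tot (isV a) L + 2 * tot (isE a) L + 2 * tot (isE b) L
      + 2 * tot (isE c) L + 2 * tot (isE d) L := by
  induction L with
  | nil => simp [tot, phi, flat]
  | cons k L ih =>
    have ih := ih (fun k hk => hv k (by simp [hk])) (fun k hk => hb k (by simp [hk]))
    have hk := hv k (by simp)
    have hbk := hb k (by simp)
    have : isV a k = isV b k + isV c k + isV d k ∧
      pot k = 7 * isF k + 3 * isV a k + isE a k + isE b k + isE c k + isE d k ∧
      (verts k).length ≤ 5 * isF k + 3 * isV a k + 2 * isE a k + 2 * isE b k + 2 * isE c k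
        + 2 * isE d k := by
      cases k with
      | F l => simpa [isF, isV, isE, pot, verts] using hk.1
      | V x y u v w =>
        have hxy := hk.1
        simp only [based] at hbk
        rcases hbk with rfl | rfl
        · rcases hall y with rfl | rfl | rfl | rfl <;>
            simp_all [isF, isV, isE, pot, verts] <;> grind
        · rcases hall x with rfl | rfl | rfl | rfl <;>
            simp_all [isF, isV, isE, pot, verts] <;> grind
      | E x u v =>
        rcases hall x with rfl | rfl | rfl | rfl <;>
            simp_all [isF, isV, isE, pot, verts] <;> grind
    simp only [tot, phi, flat, List.map_cons, List.sum_cons, List.flatMap_cons,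
      List.length_append] at ih ⊢
    omega

lemma edge_of_has {h : GameHistory n 4} {i : Fin 4} {k : Piece n} (hk : valid h k)
    (hn : (verts k).Nodup) (hi : has i k ≠ 0) :
    ∃ u ∈ verts k, ∃ v ∈ verts k, u ≠ v ∧ (s(u, v), i) ∈ h := by
  cases k with
  | F l => exact hk.2 i
  | V x y u v w =>
    obtain ⟨h1, h2, h3⟩ := hk
    simp only [has] at hi
    simp [verts] at hn
    by_cases hx : x = i
    · subst hx; exact ⟨u, by simp [verts], v, by simp [verts], by grind, h2⟩
    · have : y = i := by grind
      subst this; exact ⟨v, by simp [verts], w, by simp [verts], by grind, h3⟩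
  | E x u v =>
    simp only [has] at hi
    simp [verts] at hn
    have : x = i := by grind
    subst this; exact ⟨u, by simp [verts], v, by simp [verts], by grind, hk⟩

lemma has_le (i : Fin 4) (k : Piece n) : has i k ≤ 1 := by
  cases k <;> simp only [has] <;> (try split_ifs) <;> omega

lemma matching_of_pre {h : GameHistory n 4} (i : Fin 4) (L : List (Piece n)) (hp : Pre h L) :
    ∃ M : Finset (Sym2 (Fin n)), M.card = tot (has i) L ∧ IsMatchingIn M ∧
      (∀ e ∈ M, (e, i) ∈ h) ∧ ∀ e ∈ M, ∀ v ∈ e, v ∈ flat L := by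
  classical
  induction L with
  | nil => exact ⟨∅, by simp [tot], by simp [IsMatchingIn], by simp, by simp⟩
  | cons k L ih =>
    have hnd := hp.1
    simp only [flat, List.flatMap_cons] at hnd
    rw [List.nodup_append] at hnd
    obtain ⟨M, h1, h2, h3, h4⟩ := ih ⟨hnd.2.1, fun k hk => hp.2 k (by simp [hk])⟩
    by_cases hi : has i k = 0
    · refine ⟨M, by simpa [tot, hi] using h1, h2, h3, fun e he v hv => ?_⟩
      have := h4 e he v hv
      simp only [flat, List.flatMap_cons, List.mem_append] at this ⊢
      exact Or.inr this
    · obtain ⟨u, hu, v, hv, huv, hc⟩ := edge_of_has (hp.2 k (by simp)) hnd.1 hi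
      have hdis : ∀ e ∈ M, ∀ x ∈ e, x ∉ s(u, v) := by
        intro e he x hx hx'
        have h5 := h4 e he x hx
        rw [Sym2.mem_iff] at hx'
        rcases hx' with rfl | rfl
        · exact hnd.2.2 x hu x h5 rfl
        · exact hnd.2.2 x hv x h5 rfl
      have hnot : s(u, v) ∉ M := fun hm => hdis _ hm u (by simp) (by simp)
      refine ⟨insert s(u, v) M, ?_, ⟨?_, ?_⟩, ?_, ?_⟩
      · have := has_le i k
        rw [Finset.card_insert_of_notMem hnot, h1]
        simp only [tot, List.map_cons, List.sum_cons]
        omega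
      · intro e he
        rcases Finset.mem_insert.1 he with rfl | he
        · simpa using huv
        · exact h2.1 e he
      · intro e he f hf hef
        simp only [Finset.coe_insert, Set.mem_insert_iff, Finset.mem_coe] at he hf
        rcases he with rfl | he <;> rcases hf with rfl | hf
        · exact absurd rfl hef
        · exact fun x hx hx' => hdis f hf x hx' hx
        · exact fun x hx hx' => hdis e he x hx hx'
        · exact h2.2 he hf hef
      · intro e he
        rcases Finset.mem_insert.1 he with rfl | he
        · exact hc
        · exact h3 e he
      · intro e he x hx
        simp only [flat, List.flatMap_cons, List.mem_append]
        rcases Finset.mem_insert.1 he with rfl | he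
        · rw [Sym2.mem_iff] at hx
          rcases hx with rfl | rfl
          · exact Or.inl hu
          · exact Or.inl hv
        · exact Or.inr (h4 e he x hx)

lemma win_of_count {h : GameHistory n 4} {s K : ℕ} (i : Fin 4) (L : List (Piece n))
    (hp : Pre h L) (hc : s + 1 ≤ tot (has i) L) (hK : K ≤ n.choose 2) : Good n (s + 1) K h := by
  obtain ⟨M, h1, h2, h3, -⟩ := matching_of_pre i L hp
  obtain ⟨M', h4, h5⟩ := Finset.exists_subset_card_eq (h1 ▸ hc)
  refine pad _ _ ⟨i, M', h5, ⟨fun e he => h2.1 e (h4 he), h2.2.mono (by exact_mod_cast h4)⟩,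
    fun e he => h3 e (h4 he)⟩ ?_
  omega

lemma exists_fresh (l : List (Fin n)) (hl : l.length + 2 ≤ n) :
    ∃ u v : Fin n, u ≠ v ∧ u ∉ l ∧ v ∉ l := by
  classical
  have h1 := List.toFinset_card_le l
  have h2 : 1 < (l.toFinsetᶜ).card := by
    rw [Finset.card_compl, Fintype.card_fin]; omega
  obtain ⟨u, hu, v, hv, huv⟩ := Finset.one_lt_card.1 h2
  exact ⟨u, v, huv, by simpa using hu, by simpa using hv⟩

lemma others (a : Fin 4) : ∃ b c d : Fin 4, (∀ i : Fin 4, i = a ∨ i = b ∨ i = c ∨ i = d) ∧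
    a ≠ b ∧ a ≠ c ∧ a ≠ d ∧ b ≠ c ∧ b ≠ d ∧ c ≠ d := by
  revert a; decide

lemma exists_E {x : Fin 4} {L : List (Piece n)} (h : 0 < tot (isE x) L) :
    ∃ u v, E x u v ∈ L := by
  obtain ⟨k, hk, hp⟩ := tot_pos h
  cases k with
  | F l => simp [isE] at hp
  | V => simp [isE] at hp
  | E y u v =>
    have : y = x := by by_contra hne; simp [isE, hne] at hp
    subst this; exact ⟨u, v, hk⟩

lemma perm_of_mem {α : Type*} {k : α} {L : List α} (h : k ∈ L) : ∃ R, L.Perm (k :: R) := by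
  obtain ⟨s, t, rfl⟩ := List.append_of_mem h
  exact ⟨_, List.perm_middle⟩

lemma do_link {r K p : ℕ} (hI : IH n r K p) {h : GameHistory n 4} {L : List (Piece n)}
    {a x : Fin 4} (hax : a ≠ x) (hp : Pre h L) (hb : ∀ k ∈ L, based a k)
    (h1 : 0 < tot (isE a) L) (h2 : 0 < tot (isE x) L)
    (hphi : p ≤ phi L) (hl : h.length ≤ phi L) (hK : phi L < K) : Good n r K h := by
  obtain ⟨u, v, he⟩ := exists_E h1
  obtain ⟨z, t, hf⟩ := exists_E h2
  obtain ⟨R, hR⟩ := perm_of_mem he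
  have hf' : E x z t ∈ R := by
    have := hR.mem_iff.1 hf
    simp only [List.mem_cons, E.injEq] at this
    rcases this with h3 | h3
    · exact absurd h3.1.symm hax
    · exact h3
  obtain ⟨R', hR'⟩ := perm_of_mem hf'
  have hpm : L.Perm ([E a u v, E x z t] ++ R') := hR.trans (hR'.cons _)
  have hph : phi L = phi R' + 2 := by rw [phi_perm hpm]; simp [phi, pot]; omega
  exact step_link hI hax (hp.perm hpm) (fun k hk => hb k (hpm.mem_iff.2 (by simp [hk])))
    (by omega) (by omega) (by omega)

lemma do_two {r K p : ℕ} (hI : IH n r K p) {h : GameHistory n 4} {L : List (Piece n)}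
    {a x y z : Fin 4} (hall : ∀ c : Fin 4, c = a ∨ c = x ∨ c = y ∨ c = z)
    (hax : a ≠ x) (hay : a ≠ y) (hxy : x ≠ y) (hxz : x ≠ z) (hyz : y ≠ z)
    (hp : Pre h L) (hb : ∀ k ∈ L, based a k)
    (h0 : 0 < tot (isV x) L) (h1 : 0 < tot (isE y) L) (h2 : 0 < tot (isE z) L)
    (hphi : p ≤ phi L) (hl : h.length ≤ phi L) (hK : phi L + 1 < K) : Good n r K h := by
  obtain ⟨k, hk, hkx⟩ := tot_pos h0
  obtain ⟨l, m, he⟩ := exists_E h1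
  obtain ⟨f, g, hf⟩ := exists_E h2
  obtain ⟨R, hR⟩ := perm_of_mem hk
  cases k with
  | F l => simp [isV] at hkx
  | E => simp [isV] at hkx
  | V x1 x2 u v w =>
    have hx : x1 = x ∨ x2 = x := by by_contra hne; simp [isV, hne] at hkx
    have hba := hb _ hk
    simp only [based] at hba
    have he' : E y l m ∈ R := by
      have := hR.mem_iff.1 he
      simpa using this
    obtain ⟨R', hR'⟩ := perm_of_mem he'
    have hf' : E z f g ∈ R' := by
      have := hR'.mem_iff.1 (show E z f g ∈ R by simpa using hR.mem_iff.1 hf)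
      simp only [List.mem_cons, E.injEq] at this
      rcases this with h3 | h3
      · exact absurd h3.1.symm hyz
      · exact h3
    obtain ⟨R'', hR''⟩ := perm_of_mem hf'
    have hpm : L.Perm ([V x1 x2 u v w] ++ ([E y l m, E z f g] ++ R'')) :=
      hR.trans ((hR'.trans (hR''.cons _)).cons _)
    have hph : phi L = phi R'' + 5 := by rw [phi_perm hpm]; simp [phi, pot]; omega
    have hbR : ∀ k ∈ R'', based a k := fun k hk => hb k (hpm.mem_iff.2 (by simp [hk]))
    have hp' := hp.perm hpm
    rcases hba with rfl | rfl
    · have : x2 = x := by rcases hx with h3 | h3; exact absurd h3 hax; exact h3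
      subst this
      exact step_two hI hall hay hxy hxz hyz hp' hbR (by omega) (by omega) (by omega)
    · have : x1 = x := by rcases hx with h3 | h3; exact h3; exact absurd h3 hax
      subst this
      exact step_two hI hall hay hxy hxz hyz hp'.flip hbR (by omega) (by omega) (by omega)

lemma main_step {s p : ℕ} (hn : n = 5 * s + 2) (hC : 7 * s + 1 ≤ n.choose 2)
    (hI : IH n (s + 1) (7 * s + 1) p) {h : GameHistory n 4} {L : List (Piece n)} {a : Fin 4}
    (hphi : p ≤ phi L) (hl : h.length ≤ phi L) (hp : Pre h L) (hb : ∀ k ∈ L, based a k) :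
    Good n (s + 1) (7 * s + 1) h := by
  by_cases hw : ∃ i, s + 1 ≤ tot (has i) L
  · obtain ⟨i, hi⟩ := hw
    exact win_of_count i L hp hi hC
  push Not at hw
  obtain ⟨b, c, d, hall, hab, hac, had, hbc, hbd, hcd⟩ := others a
  obtain ⟨hV, hph, hfl⟩ := tot_V hall hab hac had hbc hbd hcd hp.2 hb
  have wa := hw a
  have wb := hw b
  have wc := hw c
  have wd := hw d
  rw [tot_has] at wa wb wc wd
  -- linking two single edges
  have link : ∀ x y : Fin 4, x ≠ y → (∀ k ∈ L, based x k) → 0 < tot (isE x) L →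
      0 < tot (isE y) L → phi L < 7 * s + 1 → Good n (s + 1) (7 * s + 1) h :=
    fun x y hxy hbx h1 h2 h3 => do_link hI hxy hp hbx h1 h2 hphi hl h3
  by_cases a1 : 0 < tot (isE a) L ∧ 0 < tot (isE b) L
  · exact link a b hab hb a1.1 a1.2 (by omega)
  by_cases a2 : 0 < tot (isE a) L ∧ 0 < tot (isE c) L
  · exact link a c hac hb a2.1 a2.2 (by omega)
  by_cases a3 : 0 < tot (isE a) L ∧ 0 < tot (isE d) L
  · exact link a d had hb a3.1 a3.2 (by omega)
  by_cases b1 : 0 < tot (isV b) L ∧ 0 < tot (isE c) L ∧ 0 < tot (isE d) L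
  · exact do_two hI hall hab hac hbc hbd hcd hp hb b1.1 b1.2.1 b1.2.2 hphi hl (by omega)
  by_cases b2 : 0 < tot (isV c) L ∧ 0 < tot (isE b) L ∧ 0 < tot (isE d) L
  · exact do_two hI (fun i => by rcases hall i with h1 | h1 | h1 | h1 <;> simp [h1])
      hac hab hbc.symm hcd hbd hp hb b2.1 b2.2.1 b2.2.2 hphi hl (by omega)
  by_cases b3 : 0 < tot (isV d) L ∧ 0 < tot (isE b) L ∧ 0 < tot (isE c) L
  · exact do_two hI (fun i => by rcases hall i with h1 | h1 | h1 | h1 <;> simp [h1])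
      had hab hbd.symm hcd.symm hbc hp hb b3.1 b3.2.1 b3.2.2 hphi hl (by omega)
  by_cases c1 : tot (isV a) L = 0 ∧ 0 < tot (isE b) L ∧ 0 < tot (isE c) L
  · refine link b c hbc (fun k hk => ?_) c1.2.1 c1.2.2 (by omega)
    have hk0 : isV a k = 0 := by
      have h1 : isV a k ≤ tot (isV a) L :=
        List.single_le_sum (by simp) _ (List.mem_map_of_mem hk)
      omega
    have hbk := hb k hk
    cases k with
    | V x y u v w => simp only [based] at hbk; simp [isV, hbk] at hk0
    | _ => trivial
  have hlen : (flat L).length + 2 ≤ n := by omega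
  obtain ⟨u, v, huv, hu, hv⟩ := exists_fresh _ hlen
  refine ask u v huv _ hl (by omega) fun e h' hs hc hl' => ?_
  have hph' : phi ([E e u v] ++ L) = phi L + 1 := by simp [phi, pot]; omega
  refine hI h' ([E e u v] ++ L) a (by omega) (by omega) ⟨?_, ?_⟩ ?_
  · have := hp.1
    have h2 : flat ([E e u v] ++ L) = u :: v :: flat L := by simp [flat, verts]
    rw [h2, List.nodup_cons, List.nodup_cons]
    exact ⟨by simp [huv, hu], hv, this⟩
  · intro k hk
    rcases List.mem_append.1 hk with hk | hk
    · rw [List.mem_singleton] at hk; subst hk; exact hc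
    · exact (hp.2 k hk).mono hs
  · simpa [based] using hb

lemma main_all {s : ℕ} (hn : n = 5 * s + 2) (hC : 7 * s + 1 ≤ n.choose 2) (m : ℕ) :
    ∀ p, 7 * s + 8 ≤ p + m → IH n (s + 1) (7 * s + 1) p := by
  induction m with
  | zero =>
    intro p hm h L a hpL hl hp hb
    -- the potential is too large, so some colour has already won
    by_cases hw : ∃ i, s + 1 ≤ tot (has i) L
    · obtain ⟨i, hi⟩ := hw
      exact win_of_count i L hp hi hC
    push Not at hw
    obtain ⟨b, c, d, hall, hab, hac, had, hbc, hbd, hcd⟩ := others a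
    obtain ⟨hV, hph, hfl⟩ := tot_V hall hab hac had hbc hbd hcd hp.2 hb
    have wa := hw a
    have wb := hw b
    have wc := hw c
    have wd := hw d
    rw [tot_has] at wa wb wc wd
    omega
  | succ m ih =>
    intro p hm h L a hpL hl hp hb
    exact main_step hn hC (ih (p + 1) (by omega)) (by omega) hl hp hb

end RamseyAux

/-- For `r ≥ 1`, `R̃₄(rK₂; 5r − 3) ≤ 7r − 5`. -/
theorem restrictedOnlineRamsey_four_colours_upper (r : ℕ) (hr : 1 ≤ r) :
    restrictedOnlineRamsey (5 * r - 3) 4 (fun _ => r) ≤ 7 * r - 5 := by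
  obtain ⟨s, rfl⟩ : ∃ s, r = s + 1 := ⟨r - 1, by omega⟩
  have hn : 5 * (s + 1) - 3 = 5 * s + 2 := by omega
  rw [hn]
  have hC : 7 * s + 1 ≤ (5 * s + 2).choose 2 := by
    rw [Nat.choose_two_right, Nat.le_div_iff_mul_le (by norm_num)]
    have : 5 * s + 2 - 1 = 5 * s + 1 := by omega
    rw [this]
    nlinarith [Nat.zero_le s, Nat.le_mul_self s]
  have hG : RamseyAux.Good (5 * s + 2) (s + 1) (7 * s + 1) [] :=
    RamseyAux.main_step rfl hC (RamseyAux.main_all rfl hC (7 * s + 8) 0 (by omega)) (L := [])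
      (a := 0) (by simp) (by simp) ⟨by simp [RamseyAux.flat], by simp⟩ (by simp)
  haveI : Nonempty (Sym2 (Fin (5 * s + 2))) := ⟨s(0, 0)⟩
  have hB := RamseyAux.builderWins (K := 7 * s + 1) hG
  refine (Nat.sInf_le hB).trans ?_
  omega
end

section
/- Fix an integer t ≥ 2 and positive integers r_1, ..., r_t. If n ≥ R(r_1K_2, ..., r_tK_2), then R̃(r_1K_2, ..., r_tK_2; n) ≤ ((2t − 1 + (t − 3)·log₂(t − 2)) / (t + 1)) · n, with the convention that log₂ 0 = 0; that is, Builder has a strategy that, playing on K_n with t colors, guarantees within ⌊((2t − 1 + (t − 3)·log₂(t − 2))/(t + 1)) · n⌋ moves that some color i has r_i pairwise disjoint edges of color i, against every Painter strategy. -/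
open Finset

/-! ### Coloured trees -/

/-- Trees with coloured edges. -/
inductive PTree {n t : ℕ} : Finset (Fin n) → Finset (Sym2 (Fin n) × Fin t) → Prop
  | single (v : Fin n) : PTree {v} ∅
  | join {W1 W2 : Finset (Fin n)} {E1 E2 : Finset (Sym2 (Fin n) × Fin t)} (a b : Fin n)
      (c : Fin t) (h1 : PTree W1 E1) (h2 : PTree W2 E2) (hd : Disjoint W1 W2)
      (ha : a ∈ W1) (hb : b ∈ W2) : PTree (W1 ∪ W2) (insert (s(a, b), c) (E1 ∪ E2))

/-- The data of a tree cut along an edge. -/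
structure TCut {n t : ℕ} (W : Finset (Fin n)) (E : Finset (Sym2 (Fin n) × Fin t))
    (a b : Fin n) (c : Fin t) (W1 : Finset (Fin n)) (E1 : Finset (Sym2 (Fin n) × Fin t))
    (W2 : Finset (Fin n)) (E2 : Finset (Sym2 (Fin n) × Fin t)) : Prop where
  t1 : PTree W1 E1
  t2 : PTree W2 E2
  disj : Disjoint W1 W2
  ha : a ∈ W1
  hb : b ∈ W2
  hW : W = W1 ∪ W2
  hE : E = insert (s(a, b), c) (E1 ∪ E2)

section trees

variable {n t : ℕ}

theorem TCut.symm {W : Finset (Fin n)} {E : Finset (Sym2 (Fin n) × Fin t)} {a b : Fin n}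
    {c : Fin t} {W1 E1 W2 E2} (h : TCut W E a b c W1 E1 W2 E2) : TCut W E b a c W2 E2 W1 E1 :=
  ⟨h.t2, h.t1, h.disj.symm, h.hb, h.ha, by rw [h.hW, union_comm],
    by rw [h.hE, union_comm E1, Sym2.eq_swap]⟩

theorem PTree.mem_of {W : Finset (Fin n)} {E : Finset (Sym2 (Fin n) × Fin t)} (h : PTree W E) :
    ∀ x ∈ E, ∀ v ∈ x.1, v ∈ W := by
  induction h with
  | single v => simp
  | join a b c h1 h2 hd ha hb ih1 ih2 =>
    intro x hx v hv
    simp only [mem_insert, mem_union] at hx ⊢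
    rcases hx with rfl | hx | hx
    · simp only [Sym2.mem_iff] at hv
      rcases hv with rfl | rfl
      · exact Or.inl ha
      · exact Or.inr hb
    · exact Or.inl (ih1 x hx v hv)
    · exact Or.inr (ih2 x hx v hv)

theorem PTree.nonempty {W : Finset (Fin n)} {E : Finset (Sym2 (Fin n) × Fin t)}
    (h : PTree W E) : W.Nonempty := by
  induction h with
  | single v => simp
  | join a b c h1 h2 hd ha hb ih1 ih2 => exact ⟨a, by simp [ha]⟩

theorem PTree.not_isDiag {W : Finset (Fin n)} {E : Finset (Sym2 (Fin n) × Fin t)}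
    (h : PTree W E) : ∀ x ∈ E, ¬ x.1.IsDiag := by
  induction h with
  | single v => simp
  | join a b c h1 h2 hd ha hb ih1 ih2 =>
    intro x hx
    simp only [mem_insert, mem_union] at hx
    rcases hx with rfl | hx | hx
    · simp only [Sym2.mk_isDiag_iff]
      rintro rfl
      exact disjoint_left.1 hd ha hb
    · exact ih1 x hx
    · exact ih2 x hx

theorem PTree.card {W : Finset (Fin n)} {E : Finset (Sym2 (Fin n) × Fin t)}
    (h : PTree W E) : E.card + 1 = W.card := by
  induction h with
  | single v => simp
  | @join W1 W2 E1 E2 a b c h1 h2 hd ha hb ih1 ih2 =>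
    have hE : Disjoint E1 E2 := by
      rw [disjoint_left]
      rintro ⟨x, i⟩ hx1 hx2
      induction x with | _ p q =>
      exact disjoint_left.1 hd (h1.mem_of _ hx1 p (by simp)) (h2.mem_of _ hx2 p (by simp))
    have hn : (s(a, b), c) ∉ E1 ∪ E2 := by
      simp only [mem_union, not_or]
      exact ⟨fun hx => disjoint_left.1 hd (h1.mem_of _ hx b (by simp)) hb,
        fun hx => disjoint_left.1 hd ha (h2.mem_of _ hx a (by simp))⟩
    rw [card_insert_of_notMem hn, card_union_of_disjoint hE, card_union_of_disjoint hd]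
    omega

theorem PTree.cut {W : Finset (Fin n)} {E : Finset (Sym2 (Fin n) × Fin t)}
    (h : PTree W E) : ∀ a b c, (s(a, b), c) ∈ E → ∃ W1 E1 W2 E2, TCut W E a b c W1 E1 W2 E2 := by
  induction h with
  | single v => simp
  | @join W1 W2 E1 E2 p q i h1 h2 hd hp hq ih1 ih2 =>
    intro a b c hx
    simp only [mem_insert, mem_union] at hx
    rcases hx with hx | hx | hx
    · have hc : TCut (W1 ∪ W2) (insert (s(p, q), i) (E1 ∪ E2)) p q i W1 E1 W2 E2 :=
        ⟨h1, h2, hd, hp, hq, rfl, rfl⟩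
      simp only [Prod.mk.injEq, Sym2.eq_iff] at hx
      rcases hx with ⟨⟨rfl, rfl⟩ | ⟨rfl, rfl⟩, rfl⟩
      · exact ⟨_, _, _, _, hc⟩
      · exact ⟨_, _, _, _, hc.symm⟩
    · obtain ⟨A, EA, B, EB, k⟩ := ih1 a b c hx
      have hW := k.hW
      have hE := k.hE
      subst hW hE
      rw [disjoint_union_left] at hd
      rcases mem_union.1 hp with hp | hp
      · exact ⟨A ∪ W2, insert (s(p, q), i) (EA ∪ E2), B, EB, PTree.join p q i k.t1 h2 hd.1 hp hq,
          k.t2, disjoint_union_left.2 ⟨k.disj, hd.2.symm⟩, mem_union_left _ k.ha, k.hb,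
          by ext; simp only [mem_union]; tauto, by ext; simp only [mem_union, mem_insert]; tauto⟩
      · exact ⟨A, EA, B ∪ W2, insert (s(p, q), i) (EB ∪ E2), k.t1, PTree.join p q i k.t2 h2 hd.2 hp hq,
          disjoint_union_right.2 ⟨k.disj, hd.1⟩, k.ha, mem_union_left _ k.hb,
          by ext; simp only [mem_union]; tauto, by ext; simp only [mem_union, mem_insert]; tauto⟩
    · obtain ⟨A, EA, B, EB, k⟩ := ih2 a b c hx
      have hW := k.hW
      have hE := k.hE
      subst hW hE
      rw [disjoint_union_right] at hd
      rcases mem_union.1 hq with hq | hq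
      · exact ⟨W1 ∪ A, insert (s(p, q), i) (E1 ∪ EA), B, EB, PTree.join p q i h1 k.t1 hd.1 hp hq,
          k.t2, disjoint_union_left.2 ⟨hd.2, k.disj⟩, mem_union_right _ k.ha, k.hb,
          by ext; simp only [mem_union]; tauto, by ext; simp only [mem_union, mem_insert]; tauto⟩
      · exact ⟨A, EA, W1 ∪ B, insert (s(p, q), i) (E1 ∪ EB), k.t1, PTree.join p q i h1 k.t2 hd.2 hp hq,
          disjoint_union_right.2 ⟨hd.1.symm, k.disj⟩, k.ha, mem_union_right _ k.hb,
          by ext; simp only [mem_union]; tauto, by ext; simp only [mem_union, mem_insert]; tauto⟩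

/-- A subtree avoiding the cut edge stays on one side of the cut. -/
theorem PTree.side {W0 : Finset (Fin n)} {E0 : Finset (Sym2 (Fin n) × Fin t)}
    (h : PTree W0 E0) {W E a b c W1 E1 W2 E2} (k : TCut W E a b c W1 E1 W2 E2)
    (hW : W0 ⊆ W) (hE : E0 ⊆ E) (hx : (s(a, b), c) ∉ E0) : W0 ⊆ W1 ∨ W0 ⊆ W2 := by
  have hW' := k.hW
  have hE' := k.hE
  subst hW' hE'
  induction h with
  | single v => simpa using hW
  | @join U1 U2 F1 F2 p q i h1 h2 hd hp hq ih1 ih2 =>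
    have hE1 : F1 ⊆ insert (s(a, b), c) (E1 ∪ E2) := fun x hx => hE (by simp [hx])
    have hE2 : F2 ⊆ insert (s(a, b), c) (E1 ∪ E2) := fun x hx => hE (by simp [hx])
    simp only [mem_insert, mem_union, not_or] at hx
    have i1 := ih1 hx.2.1 (subset_union_left.trans hW) hE1
    have i2 := ih2 hx.2.2 (subset_union_right.trans hW) hE2
    have hpq : (s(p, q), i) ∈ insert (s(a, b), c) (E1 ∪ E2) := hE (by simp)
    have hpq2 : (s(p, q), i) ∈ E1 ∨ (s(p, q), i) ∈ E2 := by
      simp only [mem_insert, mem_union] at hpq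
      rcases hpq with hpq | hpq
      · exact absurd hpq.symm hx.1
      · exact hpq
    rcases hpq2 with hh | hh
    · have hp' := k.t1.mem_of _ hh p (by simp)
      have hq' := k.t1.mem_of _ hh q (by simp)
      left
      rcases i1 with i1 | i1
      · rcases i2 with i2 | i2
        · exact union_subset i1 i2
        · exact absurd (i2 hq) (disjoint_left.1 k.disj hq')
      · exact absurd (i1 hp) (disjoint_left.1 k.disj hp')
    · have hp' := k.t2.mem_of _ hh p (by simp)
      have hq' := k.t2.mem_of _ hh q (by simp)
      right
      rcases i1 with i1 | i1
      · exact absurd hp' (disjoint_left.1 k.disj (i1 hp))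
      · rcases i2 with i2 | i2
        · exact absurd hq' (disjoint_left.1 k.disj (i2 hq))
        · exact union_subset i1 i2

theorem TCut.card {W : Finset (Fin n)} {E : Finset (Sym2 (Fin n) × Fin t)} {a b : Fin n}
    {c : Fin t} {W1 E1 W2 E2} (h : TCut W E a b c W1 E1 W2 E2) :
    W.card = W1.card + W2.card := by
  rw [h.hW, card_union_of_disjoint h.disj]

/-- Every tree has a centroid. -/
theorem PTree.centroid {W : Finset (Fin n)} {E : Finset (Sym2 (Fin n) × Fin t)}
    (h : PTree W E) : ∃ w ∈ W, ∀ b c W1 E1 W2 E2, TCut W E w b c W1 E1 W2 E2 →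
      2 * W2.card ≤ W.card := by
  by_contra hcon
  push Not at hcon
  have hex : ∃ m : ℕ, ∃ w b c W1 E1 W2 E2, TCut W E w b c W1 E1 W2 E2 ∧ W.card < 2 * W2.card ∧
      W2.card = m := by
    obtain ⟨w, hw⟩ := h.nonempty
    obtain ⟨b, c, W1, E1, W2, E2, k, hk⟩ := hcon w hw
    exact ⟨_, w, b, c, W1, E1, W2, E2, k, hk, rfl⟩
  classical
  obtain ⟨w, b, c, W1, E1, W2, E2, k, hk, hm⟩ := Nat.find_spec hex
  have hmin := fun m => @Nat.find_min' _ _ hex m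
  rw [← hm] at hmin
  have hbW : b ∈ W := by rw [k.hW]; exact mem_union_right _ k.hb
  obtain ⟨b', c', V1, F1, V2, F2, k', hk'⟩ := hcon b hbW
  have hle : W2.card ≤ V2.card := hmin _ ⟨b, b', c', V1, F1, V2, F2, k', hk', rfl⟩
  have hc1 := k.card
  have hc2 := k'.card
  have hb1 : b ∉ W1 := disjoint_right.1 k.disj k.hb
  by_cases hx : (s(b, b'), c') ∈ E2
  · have hT : PTree (W1 ∪ {b}) (insert (s(w, b), c) (E1 ∪ ∅)) :=
      PTree.join w b c k.t1 (PTree.single b) (by simpa using hb1) k.ha (by simp)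
    have hs := hT.side k' (by
        rw [k.hW]; exact union_subset_union_right (by simpa using k.hb))
      (by rw [k.hE]; intro x; simp; tauto) (by
        simp only [union_empty, mem_insert, not_or]
        refine ⟨?_, fun hh => hb1 (k.t1.mem_of _ hh b (by simp))⟩
        intro hh
        rw [hh] at hx
        exact disjoint_left.1 k.disj k.ha (k.t2.mem_of _ hx w (by simp)))
    rcases hs with hs | hs
    · have := card_le_card hs
      rw [card_union_of_disjoint (by simpa using hb1)] at this
      simp at this
      omega
    · exact disjoint_left.1 k'.disj k'.ha (hs (by simp))
  · have hs := k.t2.side k' (by rw [k.hW]; exact subset_union_right)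
      (by rw [k.hE]; intro x; simp; tauto) hx
    rcases hs with hs | hs
    · have := card_le_card hs
      omega
    · exact disjoint_left.1 k'.disj k'.ha (hs k.hb)

theorem PTree.eq_empty_or {W : Finset (Fin n)} {E : Finset (Sym2 (Fin n) × Fin t)}
    (h : PTree W E) : ∀ b ∈ W, E = ∅ ∨ ∃ x ∈ E, b ∈ x.1 := by
  induction h with
  | single v => simp
  | @join U1 U2 F1 F2 p q i h1 h2 hd hp hq ih1 ih2 =>
    intro b hb
    right
    rcases mem_union.1 hb with hb | hb
    · rcases ih1 b hb with hh | ⟨x, hx, hbx⟩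
      · have := h1.card
        rw [hh, card_empty] at this
        obtain ⟨y, rfl⟩ := card_eq_one.1 this.symm
        simp only [mem_singleton] at hb hp
        subst hb hp
        exact ⟨_, mem_insert_self _ _, by simp⟩
      · exact ⟨x, by simp [hx], hbx⟩
    · rcases ih2 b hb with hh | ⟨x, hx, hbx⟩
      · have := h2.card
        rw [hh, card_empty] at this
        obtain ⟨y, rfl⟩ := card_eq_one.1 this.symm
        simp only [mem_singleton] at hb hq
        subst hb hq
        exact ⟨_, mem_insert_self _ _, by simp⟩
      · exact ⟨x, by simp [hx], hbx⟩

/-- Trees are bipartite. -/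
theorem PTree.bipartite {W : Finset (Fin n)} {E : Finset (Sym2 (Fin n) × Fin t)}
    (h : PTree W E) : ∃ f : Fin n → Bool, ∀ a b c, (s(a, b), c) ∈ E → f b = !(f a) := by
  induction h with
  | single v => exact ⟨fun _ => true, by simp⟩
  | @join U1 U2 F1 F2 p q i h1 h2 hd hp hq ih1 ih2 =>
    obtain ⟨f, hf⟩ := ih1
    obtain ⟨g, hg⟩ := ih2
    refine ⟨fun v => if v ∈ U1 then f v else xor (g v) (xor (g q) (!(f p))), ?_⟩
    have hq1 : q ∉ U1 := disjoint_right.1 hd hq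
    intro a b c hx
    simp only [mem_insert, mem_union] at hx
    rcases hx with hx | hx | hx
    · simp only [Prod.mk.injEq, Sym2.eq_iff] at hx
      rcases hx with ⟨⟨rfl, rfl⟩ | ⟨rfl, rfl⟩, rfl⟩
      · simp [hp, hq1]
      · simp [hp, hq1]
    · have ha := h1.mem_of _ hx a (by simp)
      have hb := h1.mem_of _ hx b (by simp)
      simp [ha, hb, hf a b c hx]
    · have ha := disjoint_right.1 hd (h2.mem_of _ hx a (by simp))
      have hb := disjoint_right.1 hd (h2.mem_of _ hx b (by simp))
      simp [ha, hb, hg a b c hx]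

/-- Properly coloured edge sets. -/
def ProperE (E : Finset (Sym2 (Fin n) × Fin t)) : Prop :=
  ∀ x ∈ E, ∀ y ∈ E, ∀ v, v ∈ x.1 → v ∈ y.1 → x.2 = y.2 → x = y

theorem ProperE.mono {E F : Finset (Sym2 (Fin n) × Fin t)} (h : ProperE F) (hs : E ⊆ F) :
    ProperE E := fun x hx y hy => h x (hs hx) y (hs hy)

theorem ProperE.join {W1 W2 : Finset (Fin n)} {E1 E2 : Finset (Sym2 (Fin n) × Fin t)}
    {a b : Fin n} {c : Fin t} (h1 : PTree W1 E1) (h2 : PTree W2 E2) (hd : Disjoint W1 W2)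
    (ha : a ∈ W1) (hb : b ∈ W2) (p1 : ProperE E1) (p2 : ProperE E2)
    (hca : ∀ x ∈ E1, a ∈ x.1 → x.2 ≠ c) (hcb : ∀ x ∈ E2, b ∈ x.1 → x.2 ≠ c) :
    ProperE (insert (s(a, b), c) (E1 ∪ E2)) := by
  have key : ∀ y ∈ E1 ∪ E2, ∀ v, v ∈ s(a, b) → v ∈ y.1 → y.2 ≠ c := by
    intro y hy v hv hvy
    rcases mem_union.1 hy with hy | hy
    · have := h1.mem_of y hy v hvy
      rcases Sym2.mem_iff.1 hv with rfl | rfl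
      · exact hca y hy hvy
      · exact absurd hb (disjoint_left.1 hd this)
    · have := h2.mem_of y hy v hvy
      rcases Sym2.mem_iff.1 hv with rfl | rfl
      · exact absurd this (disjoint_left.1 hd ha)
      · exact hcb y hy hvy
  intro x hx y hy v hvx hvy hxy
  rcases mem_insert.1 hx with rfl | hx
  · rcases mem_insert.1 hy with rfl | hy
    · rfl
    · exact absurd hxy.symm (key y hy v hvx hvy)
  · rcases mem_insert.1 hy with rfl | hy
    · exact absurd hxy (key x hx v hvy hvx)
    · rcases mem_union.1 hx with hx | hx
      · rcases mem_union.1 hy with hy | hy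
        · exact p1 x hx y hy v hvx hvy hxy
        · exact absurd (h2.mem_of y hy v hvy) (disjoint_left.1 hd (h1.mem_of x hx v hvx))
      · rcases mem_union.1 hy with hy | hy
        · exact absurd (h2.mem_of x hx v hvx) (disjoint_left.1 hd (h1.mem_of y hy v hvy))
        · exact p2 x hx y hy v hvx hvy hxy

end trees

/-! ### The game -/

/-- Positions from which Builder wins by total time `K`. -/
inductive CanWin {n t : ℕ} (r : Fin t → ℕ) (K : ℕ) : GameHistory n t → Prop
  | done (h : GameHistory n t) (hm : HistoryHasMatching n t r h) (hl : h.length ≤ K) : CanWin r K h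
  | step (h : GameHistory n t) (e : Sym2 (Fin n)) (hd : ¬ e.IsDiag) (he : e ∉ h.map Prod.fst)
      (hs : ∀ i, CanWin r K (h ++ [(e, i)])) : CanWin r K h

section game

variable {n t : ℕ} {r : Fin t → ℕ} {K : ℕ}

theorem CanWin.query {h : GameHistory n t} (e : Sym2 (Fin n)) (hd : ¬ e.IsDiag)
    (H : ∀ (h' : GameHistory n t) (i : Fin t), h ⊆ h' → h'.length ≤ h.length + 1 → (e, i) ∈ h' →
      CanWin r K h') : CanWin r K h := by
  by_cases he : e ∈ h.map Prod.fst
  · obtain ⟨⟨e', i⟩, hx, rfl⟩ := List.mem_map.1 he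
    exact H h i (List.Subset.refl _) (by omega) hx
  · refine CanWin.step h e hd he fun i => H _ i (List.subset_append_left _ _) (by simp) (by simp)

theorem CanWin.length_le (i0 : Fin t) {h : GameHistory n t} (hw : CanWin r K h) :
    h.length ≤ K := by
  induction hw with
  | done h hm hl => exact hl
  | step h e hd he hs ih =>
    have := ih i0
    simp at this
    omega

theorem HistoryHasMatching.mono {h h' : GameHistory n t} (hm : HistoryHasMatching n t r h)
    (hs : h ⊆ h') : HistoryHasMatching n t r h' := by
  obtain ⟨i, M, h1, h2, h3⟩ := hm
  exact ⟨i, M, h1, h2, fun e he => hs (h3 e he)⟩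

theorem CanWin.wins (i0 : Fin t) (v0 : Fin n) (hw : CanWin (n := n) r K []) :
    ∃ k ≤ K, BuilderWinsIn n t r k := by
  classical
  set S : Finset (Sym2 (Fin n)) := univ.filter (fun e => ¬ e.IsDiag) with hS
  have hB : ∀ h : GameHistory n t, ∃ e : Sym2 (Fin n),
      ((CanWin r K h ∧ ¬ HistoryHasMatching n t r h) → ∀ i, CanWin r K (h ++ [(e, i)])) ∧
      ((∃ e', ¬ e'.IsDiag ∧ e' ∉ h.map Prod.fst) → ¬ e.IsDiag ∧ e ∉ h.map Prod.fst) := by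
    intro h
    by_cases hc : CanWin r K h ∧ ¬ HistoryHasMatching n t r h
    · obtain ⟨hc, hm⟩ := hc
      cases hc with
      | done _ hm' hl => exact absurd hm' hm
      | step _ e hd he hs => exact ⟨e, fun _ => hs, fun _ => ⟨hd, he⟩⟩
    · by_cases hex : ∃ e' : Sym2 (Fin n), ¬ e'.IsDiag ∧ e' ∉ h.map Prod.fst
      · obtain ⟨e, he⟩ := hex
        exact ⟨e, fun h => absurd h hc, fun _ => he⟩
      · exact ⟨s(v0, v0), fun h => absurd h hc, fun h => absurd h hex⟩
  choose B hB1 hB2 using hB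
  have hlen : ∀ P j, (gamePlay B P j).length = j := by
    intro P j
    induction j with
    | zero => simp [gamePlay]
    | succ j ih => simp [gamePlay, ih]
  have hfree : ∀ P j, j < S.card →
      ¬ (B (gamePlay B P j)).IsDiag ∧ B (gamePlay B P j) ∉ (gamePlay B P j).map Prod.fst := by
    intro P j hj
    apply hB2
    have h1 : ((gamePlay B P j).map Prod.fst).toFinset.card < S.card := by
      refine lt_of_le_of_lt (List.toFinset_card_le _) ?_
      simpa [hlen] using hj
    obtain ⟨e, he, he'⟩ := exists_mem_notMem_of_card_lt_card h1
    exact ⟨e, by simpa [hS] using he, by simpa using he'⟩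
  have hinv : ∀ P j, HistoryHasMatching n t r (gamePlay B P j) ∨ CanWin r K (gamePlay B P j) := by
    intro P j
    induction j with
    | zero => exact Or.inr hw
    | succ j ih =>
      by_cases hm : HistoryHasMatching n t r (gamePlay B P j)
      · left
        exact hm.mono (List.subset_append_left _ _)
      · right
        exact hB1 _ ⟨ih.resolve_left hm, hm⟩ _
  have hnd : ∀ P j, j ≤ S.card → ((gamePlay B P j).map Prod.fst).Nodup ∧
      ∀ e ∈ (gamePlay B P j).map Prod.fst, ¬ e.IsDiag := by
    intro P j
    induction j with
    | zero => simp [gamePlay]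
    | succ j ih =>
      intro hj
      obtain ⟨h1, h2⟩ := ih (by omega)
      obtain ⟨h3, h4⟩ := hfree P j (by omega)
      simp only [gamePlay, List.map_append, List.map_cons, List.map_nil]
      refine ⟨?_, ?_⟩
      · rw [List.nodup_append]
        refine ⟨h1, by simp, ?_⟩
        intro a ha b hb hab
        simp only [List.mem_singleton] at hb
        subst hab hb
        exact h4 ha
      · intro e he
        rcases List.mem_append.1 he with he | he
        · exact h2 e he
        · simp only [List.mem_singleton] at he
          subst he
          exact h3
  refine ⟨min K S.card, min_le_left _ _, B, fun P j hj => hfree P j (by omega), fun P => ?_⟩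
  rcases hinv P (min K S.card) with hm | hc
  · exact hm
  cases hc with
  | done _ hm hl => exact hm
  | step _ e hd he hs =>
    exfalso
    have h1 := (hs i0).length_le i0
    simp only [List.length_append, hlen, List.length_singleton] at h1
    have h2 : min K S.card = S.card := by omega
    rw [h2] at he
    obtain ⟨h3, h4⟩ := hnd P S.card le_rfl
    have h5 : ((gamePlay B P S.card).map Prod.fst).toFinset = S := by
      apply eq_of_subset_of_card_le
      · intro x hx
        rw [List.mem_toFinset] at hx
        simpa [hS] using h4 x hx
      · rw [List.toFinset_card_of_nodup h3]
        simp [hlen]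
    have : e ∈ S := by simpa [hS] using hd
    rw [← h5, List.mem_toFinset] at this
    exact he this

end game
/-! ### Merging an edge into a tree -/

section merge

variable {n t : ℕ} {r : Fin t → ℕ} {K : ℕ}

/-- The end of `w` in the new edge. -/
def sideOf (u v : Fin n) (f : Fin n → Bool) (w : Fin n) : Fin n := if f w then u else v

/-- The fixed data of a merge. -/
structure SCtx (W : Finset (Fin n)) (E : Finset (Sym2 (Fin n) × Fin t)) (u v : Fin n) (d : Fin t)
    (f : Fin n → Bool) : Prop where
  tree : PTree W E
  prop : ProperE E
  hu : u ∉ W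
  hv : v ∉ W
  huv : u ≠ v
  hd : ∀ x ∈ E, x.2 ≠ d
  hf : ∀ a b c, (s(a, b), c) ∈ E → f b = !(f a)

/-- The history contains the tree and the new edge. -/
def HOk (E : Finset (Sym2 (Fin n) × Fin t)) (u v : Fin n) (d : Fin t) (h : GameHistory n t) : Prop :=
  (∀ x ∈ E, x ∈ h) ∧ (s(u, v), d) ∈ h

theorem HOk.mono {E : Finset (Sym2 (Fin n) × Fin t)} {u v : Fin n} {d : Fin t}
    {h h' : GameHistory n t} (H : HOk E u v d h) (hs : h ⊆ h') : HOk E u v d h' :=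
  ⟨fun x hx => hs (H.1 x hx), hs H.2⟩

/-- The result of a merge. -/
structure MOut (W : Finset (Fin n)) (E : Finset (Sym2 (Fin n) × Fin t)) (u v : Fin n) (d : Fin t)
    (h : GameHistory n t) (W' : Finset (Fin n)) (E' : Finset (Sym2 (Fin n) × Fin t)) : Prop where
  tree : PTree W' E'
  prop : ProperE E'
  sub : ∀ x ∈ E', x ∈ h
  hW : W' ⊆ W ∪ {u, v}
  col : ∀ x ∈ E, ∃ y ∈ E', y.2 = x.2
  cold : ∃ y ∈ E', y.2 = d
  card : E'.card = E.card + 1 ∨ E'.card = E.card + 2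

/-- The vertex `w` points to an edge of `EX`. -/
def Point (u v : Fin n) (f : Fin n → Bool) (h : GameHistory n t)
    (EX : Finset (Sym2 (Fin n) × Fin t)) (w : Fin n) : Prop :=
  ∃ b c, (s(w, b), c) ∈ EX ∧ (s(sideOf u v f w, w), c) ∈ h

/-- Candidate subtrees. -/
structure Cand (W : Finset (Fin n)) (E : Finset (Sym2 (Fin n) × Fin t)) (u v : Fin n)
    (f : Fin n → Bool) (h : GameHistory n t) (WX : Finset (Fin n))
    (EX : Finset (Sym2 (Fin n) × Fin t)) : Prop where
  tree : PTree WX EX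
  hE : EX ⊆ E
  hW : WX ⊆ W
  cand : ∀ w ∈ WX, (∀ x ∈ E, w ∈ x.1 → x ∈ EX) ∨ Point u v f h EX w

variable {W : Finset (Fin n)} {E : Finset (Sym2 (Fin n) × Fin t)} {u v : Fin n} {d : Fin t}
  {f : Fin n → Bool} {h : GameHistory n t}

theorem sideOf_mem (w : Fin n) : sideOf u v f w ∈ ({u, v} : Finset (Fin n)) := by
  unfold sideOf; split_ifs <;> simp

theorem SCtx.disj (S : SCtx W E u v d f) : Disjoint W {u, v} := by
  rw [disjoint_right]
  intro a ha
  simp only [mem_insert, mem_singleton] at ha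
  rcases ha with rfl | rfl
  · exact S.hu
  · exact S.hv

theorem edgeTree {u v : Fin n} (d : Fin t) (huv : u ≠ v) :
    PTree {u, v} {(s(u, v), d)} := by
  have := PTree.join (t := t) u v d (PTree.single u) (PTree.single v) (by simpa using huv)
    (by simp) (by simp)
  have h1 : ({u} : Finset (Fin n)) ∪ {v} = {u, v} := rfl
  rw [h1, union_empty, insert_empty_eq] at this
  exact this

theorem properE_singleton (x : Sym2 (Fin n) × Fin t) : ProperE {x} := by
  intro a ha b hb _ _ _ _
  rw [mem_singleton.1 ha, mem_singleton.1 hb]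

theorem SCtx.side_ne (S : SCtx W E u v d f) {w : Fin n} (hw : w ∈ W) : sideOf u v f w ≠ w := by
  intro hh
  exact disjoint_left.1 S.disj hw (hh ▸ sideOf_mem w)

theorem SCtx.answer (S : SCtx W E u v d f) (H : HOk E u v d h) {w : Fin n} (hw : w ∈ W) {c : Fin t}
    (hc : (s(sideOf u v f w, w), c) ∈ h) :
    (∃ W' E', MOut W E u v d h W' E') ∨ ∃ b, (s(w, b), c) ∈ E := by
  have hc' : (s(w, sideOf u v f w), c) ∈ h := by rwa [Sym2.eq_swap]
  have hsm : sideOf u v f w ∈ ({u, v} : Finset (Fin n)) := sideOf_mem w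
  have hsW : sideOf u v f w ∉ W := disjoint_right.1 S.disj hsm
  by_cases hcd : c = d
  · left
    subst hcd
    have hdis : Disjoint W {sideOf u v f w} := by simpa using hsW
    have hT := PTree.join w (sideOf u v f w) c S.tree (PTree.single _) hdis hw (by simp)
    refine ⟨_, _, hT, ProperE.join S.tree (PTree.single _) hdis hw (by simp) S.prop
      (by intro x hx; simp at hx) (fun x hx _ => S.hd x hx) (by simp), ?_, ?_, ?_, ?_, ?_⟩
    · intro x hx
      simp only [union_empty, mem_insert] at hx
      rcases hx with rfl | hx
      · exact hc'
      · exact H.1 x hx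
    · exact union_subset_union_right (by simpa using hsm)
    · intro x hx
      exact ⟨x, by simp [hx], rfl⟩
    · exact ⟨_, mem_insert_self _ _, rfl⟩
    · left
      have h1 := hT.card
      rw [card_union_of_disjoint hdis, ← S.tree.card, card_singleton] at h1
      omega
  · by_cases hex : ∃ x ∈ E, w ∈ x.1 ∧ x.2 = c
    · right
      obtain ⟨⟨x, i⟩, hx, hwx, rfl⟩ := hex
      obtain ⟨b, rfl⟩ := Sym2.mem_iff_exists.1 hwx
      exact ⟨b, hx⟩
    · left
      push Not at hex
      have hT := PTree.join w (sideOf u v f w) c S.tree (edgeTree d S.huv) S.disj hw hsm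
      refine ⟨_, _, hT, ProperE.join S.tree (edgeTree d S.huv) S.disj hw hsm S.prop
        (properE_singleton _) hex ?_, ?_, ?_, ?_, ?_, ?_⟩
      · intro x hx _
        rw [mem_singleton.1 hx]
        exact fun hh => hcd hh.symm
      · intro x hx
        simp only [mem_insert, mem_union, mem_singleton] at hx
        rcases hx with rfl | hx | rfl
        · exact hc'
        · exact H.1 x hx
        · exact H.2
      · exact Subset.refl _
      · intro x hx
        exact ⟨x, by simp [hx], rfl⟩
      · exact ⟨(s(u, v), d), by simp, rfl⟩
      · right
        have h1 := hT.card
        rw [card_union_of_disjoint S.disj, ← S.tree.card, card_pair S.huv] at h1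
        omega

theorem Cand.shrink {WX EX} (C : Cand W E u v f h WX EX) {w b : Fin n} {c : Fin t}
    (hc : (s(sideOf u v f w, w), c) ∈ h)
    {W1 E1 W2 E2} (k : TCut WX EX w b c W1 E1 W2 E2) :
    Cand W E u v f h ({w} ∪ W2) (insert (s(w, b), c) (∅ ∪ E2)) := by
  have key : ∀ y ∈ W2, ∀ x ∈ EX, y ∈ x.1 → x ∈ insert (s(w, b), c) (∅ ∪ E2) := by
    intro y hy x hx hyx
    rw [k.hE] at hx
    simp only [mem_insert, mem_union] at hx
    rcases hx with rfl | hx | hx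
    · simp
    · exact absurd hy (disjoint_left.1 k.disj (k.t1.mem_of x hx y hyx))
    · simp [hx]
  refine ⟨PTree.join w b c (PTree.single w) k.t2 ?_ (by simp) k.hb, ?_, ?_, ?_⟩
  · simpa using disjoint_left.1 k.disj k.ha
  · refine Subset.trans ?_ C.hE
    rw [k.hE]
    intro x
    simp only [mem_insert, mem_union]
    simp
    tauto
  · refine Subset.trans ?_ C.hW
    rw [k.hW]
    exact union_subset_union_left (by simpa using k.ha)
  · intro y hy
    rcases mem_union.1 hy with hy | hy
    · right
      rw [mem_singleton.1 hy]
      exact ⟨b, c, by simp, hc⟩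
    · have hyX : y ∈ WX := by rw [k.hW]; exact mem_union_right _ hy
      rcases C.cand y hyX with hh | ⟨b', c', h1, h2⟩
      · left
        intro x hx hyx
        exact key y hy x (hh x hx hyx) hyx
      · right
        exact ⟨b', c', key y hy _ h1 (by simp), h2⟩

theorem SCtx.terminal (S : SCtx W E u v d f) (H : HOk E u v d h) {WX EX}
    (C : Cand W E u v f h WX EX) (h1 : EX.card = 1) (hp : ∃ w ∈ WX, Point u v f h EX w) :
    ∃ W' E', MOut W E u v d h W' E' := by
  obtain ⟨w, hw, b, c, hx, hc⟩ := hp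
  have hc' : (s(w, sideOf u v f w), c) ∈ h := by rwa [Sym2.eq_swap]
  have hEX : EX = {(s(w, b), c)} := by
    obtain ⟨y, rfl⟩ := card_eq_one.1 h1
    rw [mem_singleton] at hx
    rw [hx]
  have hxE := C.hE hx
  have hcd : c ≠ d := S.hd _ hxE
  have hbX : b ∈ WX := C.tree.mem_of _ hx b (by simp)
  obtain ⟨W1, E1, W2, E2, k⟩ := S.tree.cut w b c hxE
  have hsm : sideOf u v f w ∈ ({u, v} : Finset (Fin n)) := sideOf_mem w
  have hsmb : sideOf u v f b ∈ ({u, v} : Finset (Fin n)) := sideOf_mem b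
  have hW1 : W1 ⊆ W := by rw [k.hW]; exact subset_union_left
  have hW2 : W2 ⊆ W := by rw [k.hW]; exact subset_union_right
  have hE1 : E1 ⊆ E := by rw [k.hE]; intro x hx; simp [hx]
  have hE2 : E2 ⊆ E := by rw [k.hE]; intro x hx; simp [hx]
  have hd1 : Disjoint W1 {u, v} := S.disj.mono_left hW1
  have hd2 : Disjoint W2 {u, v} := S.disj.mono_left hW2
  have hw1 : ∀ x ∈ E1, w ∈ x.1 → x.2 ≠ c := by
    intro x hx1 hwx hxc
    have := S.prop x (hE1 hx1) _ hxE w hwx (by simp) hxc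
    subst this
    exact disjoint_left.1 k.disj (k.t1.mem_of _ hx1 b (by simp)) k.hb
  have hb2 : ∀ x ∈ E2, b ∈ x.1 → x.2 ≠ c := by
    intro x hx2 hbx hxc
    have := S.prop x (hE2 hx2) _ hxE b hbx (by simp) hxc
    subst this
    exact disjoint_left.1 k.disj k.ha (k.t2.mem_of _ hx2 w (by simp))
  have huvc : ∀ y : Fin n, ∀ x ∈ ({(s(u, v), d)} : Finset (Sym2 (Fin n) × Fin t)), y ∈ x.1 → x.2 ≠ c := by
    intro y x hx _
    rw [mem_singleton.1 hx]
    exact fun hh => hcd hh.symm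
  have hT1 := PTree.join w (sideOf u v f w) c k.t1 (edgeTree d S.huv) hd1 k.ha hsm
  have hP1 := ProperE.join k.t1 (edgeTree d S.huv) hd1 k.ha hsm (S.prop.mono hE1)
    (properE_singleton _) hw1 (huvc _)
  have hcard := k.card
  have hcT := S.tree.card
  rcases C.cand b hbX with hcl | ⟨b', c', hx', hcb⟩
  · have hE2e : E2 = ∅ := by
      rcases k.t2.eq_empty_or b k.hb with hh | ⟨x, hx2, hbx⟩
      · exact hh
      · exfalso
        have := hcl x (hE2 hx2) hbx
        rw [hEX, mem_singleton] at this
        subst this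
        exact disjoint_left.1 k.disj k.ha (k.t2.mem_of _ hx2 w (by simp))
    have hc2 := k.t2.card
    rw [hE2e, card_empty] at hc2
    refine ⟨_, _, hT1, hP1, ?_, ?_, ?_, ?_, ?_⟩
    · intro x hx
      simp only [mem_insert, mem_union, mem_singleton] at hx
      rcases hx with rfl | hx | rfl
      · exact hc'
      · exact H.1 x (hE1 hx)
      · exact H.2
    · exact union_subset_union_left hW1
    · intro x hx
      rw [k.hE, hE2e] at hx
      simp only [union_empty, mem_insert] at hx
      rcases hx with rfl | hx
      · exact ⟨_, mem_insert_self _ _, rfl⟩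
      · exact ⟨x, by simp [hx], rfl⟩
    · exact ⟨(s(u, v), d), by simp, rfl⟩
    · left
      have h1 := hT1.card
      rw [card_union_of_disjoint hd1, card_pair S.huv] at h1
      omega
  · rw [hEX, mem_singleton, Prod.mk.injEq] at hx'
    obtain ⟨-, rfl⟩ := hx'
    have hne : sideOf u v f b ≠ sideOf u v f w := by
      have := S.hf w b c' hxE
      unfold sideOf
      rw [this]
      have h1 := S.huv
      have h2 := S.huv.symm
      cases f w <;> simpa
    have hd3 : Disjoint (W1 ∪ {u, v}) W2 := disjoint_union_left.2 ⟨k.disj, hd2.symm⟩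
    have hsw : sideOf u v f b ∉ W := disjoint_right.1 S.disj hsmb
    have hT2 := PTree.join (sideOf u v f b) b c' hT1 k.t2 hd3 (mem_union_right _ hsmb) k.hb
    have hP2 := ProperE.join hT1 k.t2 hd3 (mem_union_right _ hsmb) k.hb hP1 (S.prop.mono hE2)
      (c := c') (by
        intro x hx hbx
        simp only [mem_insert, mem_union] at hx
        rcases hx with rfl | hx | hx
        · exfalso
          simp only [Sym2.mem_iff] at hbx
          rcases hbx with hbx | hbx
          · rw [hbx] at hsw
            exact hsw (hW1 k.ha)
          · exact hne hbx
        · exact absurd (hW1 (k.t1.mem_of x hx _ hbx)) hsw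
        · exact huvc _ x hx hbx) hb2
    refine ⟨_, _, hT2, hP2, ?_, ?_, ?_, ?_, ?_⟩
    · intro x hx
      simp only [mem_insert, mem_union, mem_singleton] at hx
      rcases hx with rfl | (rfl | hx | rfl) | hx
      · exact hcb
      · exact hc'
      · exact H.1 x (hE1 hx)
      · exact H.2
      · exact H.1 x (hE2 hx)
    · rw [k.hW]
      intro x
      simp only [mem_union]
      tauto
    · intro x hx
      rw [k.hE] at hx
      simp only [mem_insert, mem_union] at hx
      rcases hx with rfl | hx | hx
      · exact ⟨_, mem_insert_self _ _, rfl⟩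
      · exact ⟨x, by simp [hx], rfl⟩
      · exact ⟨x, by simp [hx], rfl⟩
    · exact ⟨(s(u, v), d), by simp, rfl⟩
    · right
      have h1 := hT2.card
      rw [card_union_of_disjoint hd3, card_union_of_disjoint hd1, card_pair S.huv] at h1
      omega

theorem SCtx.searchStep (S : SCtx W E u v d f) (H : HOk E u v d h) {WX EX}
    (C : Cand W E u v f h WX EX)
    (hout : ∀ h' W' E', h ⊆ h' → h'.length ≤ h.length + 1 → MOut W E u v d h' W' E' →
      CanWin r K h')
    (hrec : ∀ h' WX' EX', h ⊆ h' → h'.length ≤ h.length + 1 → Cand W E u v f h' WX' EX' →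
      (∃ w ∈ WX', Point u v f h' EX' w) → 1 ≤ EX'.card → 2 * EX'.card ≤ EX.card + 1 →
      CanWin r K h') : CanWin r K h := by
  obtain ⟨w, hw, hcen⟩ := C.tree.centroid
  have main : ∀ h' : GameHistory n t, h ⊆ h' → h'.length ≤ h.length + 1 →
      Cand W E u v f h' WX EX → ∀ b c, (s(w, b), c) ∈ EX → (s(sideOf u v f w, w), c) ∈ h' →
      CanWin r K h' := by
    intro h' hs hl C' b c hx hc
    obtain ⟨W1, E1, W2, E2, k⟩ := C'.tree.cut w b c hx
    have C2 := C'.shrink hc k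
    have h1 := C2.tree.card
    have hdis : Disjoint {w} W2 := by simpa using disjoint_left.1 k.disj k.ha
    rw [card_union_of_disjoint hdis, card_singleton] at h1
    have h2 := hcen b c W1 E1 W2 E2 k
    have h3 := C.tree.card
    have h4 : 0 < W2.card := card_pos.2 k.t2.nonempty
    refine hrec h' _ _ hs hl C2 ⟨w, by simp, b, c, by simp, hc⟩ ?_ ?_ <;> omega
  by_cases hpt : Point u v f h EX w
  · obtain ⟨b, c, hx, hc⟩ := hpt
    exact main h (List.Subset.refl _) (by omega) C b c hx hc
  · have hcl := (C.cand w hw).resolve_right hpt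
    refine CanWin.query s(sideOf u v f w, w) ?_ ?_
    · rw [Sym2.mk_isDiag_iff]
      exact S.side_ne (C.hW hw)
    · intro h' i hs hl hi
      rcases S.answer (H.mono hs) (C.hW hw) hi with ⟨W', E', hM⟩ | ⟨b, hb⟩
      · exact hout h' W' E' hs hl hM
      · refine main h' hs hl ⟨C.tree, C.hE, C.hW, ?_⟩ b i (hcl _ hb (by simp)) hi
        intro y hy
        rcases C.cand y hy with hh | ⟨b', c', h1, h2⟩
        · exact Or.inl hh
        · exact Or.inr ⟨b', c', h1, hs h2⟩

theorem SCtx.search (S : SCtx W E u v d f) : ∀ (m : ℕ) (h : GameHistory n t) WX EX,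
    HOk E u v d h → Cand W E u v f h WX EX → EX.card = m → 1 ≤ m →
    (∃ w ∈ WX, Point u v f h EX w) →
    (∀ h' W' E', h ⊆ h' → h'.length ≤ h.length + Nat.clog 2 m → MOut W E u v d h' W' E' →
      CanWin r K h') → CanWin r K h := by
  intro m
  induction m using Nat.strong_induction_on with
  | _ m ih =>
    intro h WX EX H C hm hm1 hp hout
    by_cases h1 : m = 1
    · obtain ⟨W', E', hM⟩ := S.terminal H C (by omega) hp
      exact hout h W' E' (List.Subset.refl _) (by omega) hM
    · have hcl : Nat.clog 2 m = Nat.clog 2 ((m + 2 - 1) / 2) + 1 :=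
        Nat.clog_of_two_le (by norm_num) (by omega)
      refine S.searchStep H C ?_ ?_
      · intro h' W' E' hs hl hM
        exact hout h' W' E' hs (by omega) hM
      · intro h' WX' EX' hs hl C' hp' hc1 hc2
        refine ih EX'.card (by omega) h' WX' EX' (H.mono hs) C' rfl hc1 hp' ?_
        intro h'' W' E' hs' hl' hM
        refine hout h'' W' E' (List.Subset.trans hs hs') ?_ hM
        have : Nat.clog 2 EX'.card ≤ Nat.clog 2 ((m + 2 - 1) / 2) :=
          Nat.clog_mono_right 2 (by omega)
        omega

theorem SCtx.merge (S : SCtx W E u v d f) (H : HOk E u v d h) (hE : 1 ≤ E.card)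
    (hout : ∀ h' W' E', h ⊆ h' → h'.length ≤ h.length + (1 + Nat.log 2 (E.card - 1)) →
      MOut W E u v d h' W' E' → CanWin r K h') : CanWin r K h := by
  refine S.searchStep H (WX := W) (EX := E) ⟨S.tree, Subset.refl _, Subset.refl _,
    fun w _ => Or.inl fun x hx _ => hx⟩ ?_ ?_
  · intro h' W' E' hs hl hM
    exact hout h' W' E' hs (by omega) hM
  · intro h' WX' EX' hs hl C' hp' hc1 hc2
    refine S.search EX'.card h' WX' EX' (H.mono hs) C' rfl hc1 hp' ?_
    intro h'' W' E' hs' hl' hM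
    refine hout h'' W' E' (List.Subset.trans hs hs') ?_ hM
    have : Nat.clog 2 EX'.card ≤ Nat.log 2 (E.card - 1) := by
      apply Nat.clog_le_of_le_pow
      have := Nat.lt_pow_succ_log_self (b := 2) (by norm_num) (E.card - 1)
      rw [pow_succ] at this
      have h0 : 0 < 2 ^ Nat.log 2 (E.card - 1) := by positivity
      omega
    omega

end merge
/-! ### The strategy -/

/-- The cost of a piece. -/
def pieceCost (m k : ℕ) : ℕ := 1 + ∑ j ∈ range m, (2 + Nat.log 2 (min (2 * j) (j + k)))

theorem pieceCost_mono (m : ℕ) {k k' : ℕ} (h : k ≤ k') : pieceCost m k ≤ pieceCost m k' := by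
  unfold pieceCost
  gcongr

theorem pieceCost_succ (m k k' : ℕ) (hk : k ≤ m) (h : k' = k ∨ k' = k + 1) :
    pieceCost m k + (2 + Nat.log 2 (m + k)) ≤ pieceCost (m + 1) k' := by
  have h1 : pieceCost (m + 1) k' = pieceCost m k' + (2 + Nat.log 2 (min (2 * m) (m + k'))) := by
    unfold pieceCost
    rw [sum_range_succ]
    omega
  rw [h1]
  have h2 : pieceCost m k ≤ pieceCost m k' := pieceCost_mono m (by omega)
  have h3 : Nat.log 2 (m + k) ≤ Nat.log 2 (min (2 * m) (m + k')) := Nat.log_mono_right (by omega)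
  omega

/-- A piece: a tree together with bookkeeping numbers. -/
structure Piece (n t : ℕ) where
  /-- vertices -/
  W : Finset (Fin n)
  /-- coloured edges -/
  E : Finset (Sym2 (Fin n) × Fin t)
  /-- number of merges -/
  m : ℕ
  /-- number of merges adding two edges -/
  k : ℕ

/-- The invariant for one piece. -/
structure PieceOk {n t : ℕ} (h : GameHistory n t) (p : Piece n t) : Prop where
  tree : PTree p.W p.E
  prop : ProperE p.E
  sub : ∀ x ∈ p.E, x ∈ h
  card : p.E.card = 1 + p.m + p.k
  hk : p.k ≤ p.m
  hm : p.m + 1 ≤ (p.E.image Prod.snd).card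

/-- The invariant for the game. -/
structure PState {n t : ℕ} (h : GameHistory n t) (P : Finset (Piece n t)) (i : Fin t) : Prop where
  ok : ∀ p ∈ P, PieceOk h p
  common : ∀ p ∈ P, ∃ x ∈ p.E, x.2 = i
  disj : ∀ p ∈ P, ∀ q ∈ P, p ≠ q → Disjoint p.W q.W
  len : h.length ≤ ∑ p ∈ P, pieceCost p.m p.k

section strategy

variable {n t : ℕ} {r : Fin t → ℕ} {K : ℕ} {h : GameHistory n t} {P : Finset (Piece n t)} {i : Fin t}

theorem PieceOk.mono {h' : GameHistory n t} {p : Piece n t} (H : PieceOk h p) (hs : h ⊆ h') :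
    PieceOk h' p := ⟨H.tree, H.prop, fun x hx => hs (H.sub x hx), H.card, H.hk, H.hm⟩

theorem PState.card_biUnion (S : PState h P i) :
    (P.biUnion Piece.W).card = ∑ p ∈ P, p.W.card := by
  apply Finset.card_biUnion
  intro p hp q hq hpq
  exact S.disj p hp q hq hpq

theorem PState.sum_le (S : PState h P i) : ∑ p ∈ P, p.W.card ≤ n := by
  rw [← S.card_biUnion]
  simpa using card_le_univ (P.biUnion Piece.W)

theorem PState.length_le (S : PState h P i) (ρ : ℝ) (hρ : 0 ≤ ρ)
    (hB : ∀ m k : ℕ, k ≤ m → m + 1 ≤ t → (pieceCost m k : ℝ) ≤ ρ * (2 + m + k)) :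
    (h.length : ℝ) ≤ ρ * n := by
  have h1 : (h.length : ℝ) ≤ ∑ p ∈ P, (pieceCost p.m p.k : ℝ) := by exact_mod_cast S.len
  have h2 : ∑ p ∈ P, (pieceCost p.m p.k : ℝ) ≤ ∑ p ∈ P, ρ * (p.W.card : ℝ) := by
    apply sum_le_sum
    intro p hp
    have ho := S.ok p hp
    have hc : p.W.card = 2 + p.m + p.k := by
      have := ho.tree.card
      have := ho.card
      omega
    rw [hc]
    push_cast
    refine hB _ _ ho.hk (ho.hm.trans ?_)
    simpa using card_le_univ (p.E.image Prod.snd)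
  rw [← mul_sum] at h2
  have h3 : (∑ p ∈ P, (p.W.card : ℝ)) ≤ n := by exact_mod_cast S.sum_le
  have := mul_le_mul_of_nonneg_left h3 hρ
  linarith

theorem PState.finish (S : PState h P i)
    (hn : r i + 1 + ∑ j, (r j - 1) ≤ n) (hcov : n ≤ ∑ p ∈ P, p.W.card + 1) :
    HistoryHasMatching n t r h := by
  classical
  set F := P.biUnion Piece.E with hF
  have hmem : ∀ x ∈ F, ∃ p ∈ P, x ∈ p.E := fun x hx => mem_biUnion.1 hx
  have hpq : ∀ p ∈ P, ∀ q ∈ P, ∀ x ∈ p.E, ∀ y ∈ q.E, ∀ v, v ∈ x.1 → v ∈ y.1 → p = q := by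
    intro p hp q hq x hx y hy v hvx hvy
    by_contra hne
    exact disjoint_left.1 (S.disj p hp q hq hne) ((S.ok p hp).tree.mem_of x hx v hvx)
      ((S.ok q hq).tree.mem_of y hy v hvy)
  have hEdis : ∀ p ∈ P, ∀ q ∈ P, ∀ x ∈ p.E, x ∈ q.E → p = q := by
    rintro p hp q hq ⟨x, c⟩ hx hy
    induction x with | _ a b =>
    exact hpq p hp q hq _ hx _ hy a (by simp) (by simp)
  have hFp : ProperE F := by
    intro x hx y hy v hvx hvy hxy
    obtain ⟨p, hp, hxp⟩ := hmem x hx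
    obtain ⟨q, hq, hyq⟩ := hmem y hy
    have := hpq p hp q hq x hxp y hyq v hvx hvy
    subst this
    exact (S.ok p hp).prop x hxp y hyq v hvx hvy hxy
  have hFc : F.card = ∑ p ∈ P, p.E.card := by
    apply Finset.card_biUnion
    intro p hp q hq hne
    change Disjoint p.E q.E
    rw [disjoint_left]
    intro x hx hy
    exact hne (hEdis p hp q hq x hx hy)
  have hWc : ∑ p ∈ P, p.W.card = F.card + P.card := by
    rw [hFc, card_eq_sum_ones, ← sum_add_distrib]
    apply sum_congr rfl
    intro p hp
    exact (S.ok p hp).tree.card.symm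
  have hfib : F.card = ∑ j, (F.filter (fun x => x.2 = j)).card :=
    card_eq_sum_card_fiberwise (fun x _ => mem_coe.2 (mem_univ _))
  have hPi : P.card ≤ (F.filter (fun x => x.2 = i)).card := by
    rcases P.eq_empty_or_nonempty with hPe | ⟨p0, hp0⟩
    · simp [hPe]
    obtain ⟨x0, -, -⟩ := S.common p0 hp0
    have : Nonempty (Sym2 (Fin n) × Fin t) := ⟨x0⟩
    choose! g hg1 hg2 using S.common
    apply card_le_card_of_injOn g
    · intro p hp
      simp only [mem_coe, mem_filter]
      exact ⟨mem_biUnion.2 ⟨p, hp, hg1 p hp⟩, hg2 p hp⟩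
    · intro p hp q hq hpq'
      exact hEdis p hp q hq _ (hg1 p hp) (hpq' ▸ hg1 q hq)
  have hex : ∃ j, r j ≤ (F.filter (fun x => x.2 = j)).card := by
    by_contra hcon
    push Not at hcon
    have h1 : ∑ j, (F.filter (fun x => x.2 = j)).card ≤ ∑ j, (r j - 1) :=
      sum_le_sum fun j _ => by have := hcon j; omega
    have h2 := hcon i
    omega
  obtain ⟨j, hj⟩ := hex
  have hinj : ((F.filter (fun x => x.2 = j)).image Prod.fst).card =
      (F.filter (fun x => x.2 = j)).card := by
    apply card_image_of_injOn
    intro x hx y hy hxy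
    simp only [mem_coe, mem_filter] at hx hy
    exact Prod.ext hxy (hx.2.trans hy.2.symm)
  rw [← hinj] at hj
  obtain ⟨M, hM, hMc⟩ := exists_subset_card_eq hj
  have hMF : ∀ e ∈ M, (e, j) ∈ F := by
    intro e he
    obtain ⟨⟨e', j'⟩, hx, rfl⟩ := mem_image.1 (hM he)
    obtain ⟨hx1, hx2⟩ := mem_filter.1 hx
    simp only at hx2
    rw [← hx2]
    exact hx1
  refine ⟨j, M, hMc, ⟨?_, ?_⟩, ?_⟩
  · intro e he
    obtain ⟨p, hp, hx⟩ := hmem _ (hMF e he)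
    exact (S.ok p hp).tree.not_isDiag _ hx
  · intro e he e' he' hne v hv hv'
    exact hne (congrArg Prod.fst (hFp _ (hMF e he) _ (hMF e' he') v hv hv' rfl))
  · intro e he
    obtain ⟨p, hp, hx⟩ := hmem _ (hMF e he)
    exact (S.ok p hp).sub _ hx

theorem PState.canWin (hn : ∀ i, r i + 1 + ∑ j, (r j - 1) ≤ n)
    (ρ : ℝ) (hρ : 0 ≤ ρ)
    (hB : ∀ m k : ℕ, k ≤ m → m + 1 ≤ t → (pieceCost m k : ℝ) ≤ ρ * (2 + m + k))
    (hK : ∀ x : ℕ, (x : ℝ) ≤ ρ * n → x ≤ K) :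
    ∀ (s : ℕ) (h : GameHistory n t) (P : Finset (Piece n t)) (i : Fin t), PState h P i →
      n ≤ s + ∑ p ∈ P, p.W.card → CanWin r K h := by
  classical
  intro s
  induction s with
  | zero =>
    intro h P i S hs
    exact CanWin.done h (S.finish (hn i) (by omega)) (hK _ (S.length_le ρ hρ hB))
  | succ s ih =>
    intro h P i S hs
    by_cases hcov : n ≤ ∑ p ∈ P, p.W.card + 1
    · exact CanWin.done h (S.finish (hn i) hcov) (hK _ (S.length_le ρ hρ hB))
    have hU : 1 < (P.biUnion Piece.W)ᶜ.card := by
      rw [card_compl, S.card_biUnion, Fintype.card_fin]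
      omega
    obtain ⟨u, hu, v, hv, huv⟩ := one_lt_card.1 hU
    have huW : ∀ p ∈ P, u ∉ p.W := by
      intro p hp hup
      exact (mem_compl.1 hu) (mem_biUnion.2 ⟨p, hp, hup⟩)
    have hvW : ∀ p ∈ P, v ∉ p.W := by
      intro p hp hvp
      exact (mem_compl.1 hv) (mem_biUnion.2 ⟨p, hp, hvp⟩)
    have hduv : ∀ p ∈ P, Disjoint p.W {u, v} := by
      intro p hp
      rw [disjoint_right]
      intro a ha
      simp only [mem_insert, mem_singleton] at ha
      rcases ha with rfl | rfl
      · exact huW p hp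
      · exact hvW p hp
    refine CanWin.query s(u, v) (by simpa using huv) ?_
    intro h' d hsub hl hd
    by_cases hall : ∀ p ∈ P, ∃ x ∈ p.E, x.2 = d
    · set p0 : Piece n t := ⟨{u, v}, {(s(u, v), d)}, 0, 0⟩ with hp0
      have hp0P : p0 ∉ P := by
        intro hh
        exact huW p0 hh (by simp [hp0])
      refine ih h' (insert p0 P) d ⟨?_, ?_, ?_, ?_⟩ ?_
      · intro p hp
        rcases mem_insert.1 hp with rfl | hp
        · exact ⟨edgeTree d huv, properE_singleton _, by simpa [hp0] using hd, by simp [hp0],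
            le_rfl, by simp [hp0]⟩
        · exact (S.ok p hp).mono hsub
      · intro p hp
        rcases mem_insert.1 hp with rfl | hp
        · exact ⟨(s(u, v), d), by simp [hp0], rfl⟩
        · exact hall p hp
      · intro p hp q hq hne
        rcases mem_insert.1 hp with rfl | hp
        · rcases mem_insert.1 hq with rfl | hq
          · exact absurd rfl hne
          · exact (hduv q hq).symm
        · rcases mem_insert.1 hq with rfl | hq
          · exact hduv p hp
          · exact S.disj p hp q hq hne
      · rw [sum_insert hp0P]
        have := S.len
        have hc : pieceCost p0.m p0.k = 1 := by simp [hp0, pieceCost]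
        omega
      · rw [sum_insert hp0P]
        have hc : p0.W.card = 2 := by simp [hp0, card_pair huv]
        omega
    · push Not at hall
      obtain ⟨p, hp, hpd⟩ := hall
      have ho := S.ok p hp
      obtain ⟨f, hf⟩ := ho.tree.bipartite
      have C : SCtx p.W p.E u v d f :=
        ⟨ho.tree, ho.prop, huW p hp, hvW p hp, huv, hpd, hf⟩
      have hcard := ho.card
      refine C.merge ⟨fun x hx => hsub (ho.sub x hx), hd⟩ (by omega) ?_
      intro h'' W' E' hsub' hl' hM
      obtain ⟨k', hk', hE'⟩ : ∃ k', (k' = p.k ∨ k' = p.k + 1) ∧ E'.card = 1 + (p.m + 1) + k' := by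
        rcases hM.card with hc | hc
        · exact ⟨p.k, Or.inl rfl, by omega⟩
        · exact ⟨p.k + 1, Or.inr rfl, by omega⟩
      set q : Piece n t := ⟨W', E', p.m + 1, k'⟩ with hq
      have hqd : ∀ p' ∈ P.erase p, Disjoint q.W p'.W := by
        intro p' hp'
        obtain ⟨hne, hp'⟩ := mem_erase.1 hp'
        refine Disjoint.mono_left hM.hW ?_
        rw [disjoint_union_left]
        exact ⟨S.disj p hp p' hp' hne.symm, (hduv p' hp').symm⟩
      have hqP : q ∉ P.erase p := by
        intro hh
        have := hqd q hh
        rw [disjoint_self_iff_empty] at this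
        exact hM.tree.nonempty.ne_empty this
      have hhk := ho.hk
      refine ih h'' (insert q (P.erase p)) i ⟨?_, ?_, ?_, ?_⟩ ?_
      · intro p' hp'
        rcases mem_insert.1 hp' with rfl | hp'
        · refine ⟨hM.tree, hM.prop, hM.sub, hE', ?_, ?_⟩
          · simp only [hq]
            omega
          · have hdn : d ∉ p.E.image Prod.snd := by
              intro hh
              obtain ⟨x, hx, hxd⟩ := mem_image.1 hh
              exact hpd x hx hxd
            have hsb : insert d (p.E.image Prod.snd) ⊆ E'.image Prod.snd := by
              intro c hc
              rcases mem_insert.1 hc with rfl | hc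
              · obtain ⟨y, hy, hyd⟩ := hM.cold
                exact mem_image.2 ⟨y, hy, hyd⟩
              · obtain ⟨x, hx, rfl⟩ := mem_image.1 hc
                obtain ⟨y, hy, hyx⟩ := hM.col x hx
                exact mem_image.2 ⟨y, hy, hyx⟩
            have h1 := card_le_card hsb
            rw [card_insert_of_notMem hdn] at h1
            have h2 := ho.hm
            simp only [hq]
            omega
        · exact (S.ok p' (mem_erase.1 hp').2).mono (List.Subset.trans hsub hsub')
      · intro p' hp'
        rcases mem_insert.1 hp' with rfl | hp'
        · obtain ⟨x, hx, hxi⟩ := S.common p hp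
          obtain ⟨y, hy, hyx⟩ := hM.col x hx
          exact ⟨y, hy, hyx.trans hxi⟩
        · exact S.common p' (mem_erase.1 hp').2
      · intro p1 hp1 p2 hp2 hne
        rcases mem_insert.1 hp1 with rfl | hp1
        · rcases mem_insert.1 hp2 with rfl | hp2
          · exact absurd rfl hne
          · exact hqd p2 hp2
        · rcases mem_insert.1 hp2 with rfl | hp2
          · exact (hqd p1 hp1).symm
          · exact S.disj p1 (mem_erase.1 hp1).2 p2 (mem_erase.1 hp2).2 hne
      · rw [sum_insert hqP]
        have h1 := S.len
        rw [← add_sum_erase P _ hp] at h1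
        have h2 := pieceCost_succ p.m p.k k' ho.hk hk'
        have h3 : p.E.card - 1 = p.m + p.k := by omega
        rw [h3] at hl'
        change h''.length ≤ pieceCost (p.m + 1) k' + _
        omega
      · rw [sum_insert hqP]
        rw [← add_sum_erase P _ hp] at hs
        have h1 := ho.tree.card
        have h2 := hM.tree.card
        change n ≤ s + (W'.card + _)
        omega

end strategy
/-! ### The classical Ramsey number -/

section ramsey

variable {t : ℕ} {r : Fin t → ℕ}

theorem ramsey_set_nonempty (ht : 0 < t) :
    {N | ∀ c : Sym2 (Fin N) → Fin t, ColoringHasMatching N t r c}.Nonempty := by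
  classical
  obtain ⟨S, hS⟩ : ∃ S, S = ∑ j, r j := ⟨_, rfl⟩
  refine ⟨2 * S, ?_⟩
  intro c
  let a : Fin S → Fin (2 * S) := fun k => ⟨2 * k, by omega⟩
  let b : Fin S → Fin (2 * S) := fun k => ⟨2 * k + 1, by omega⟩
  let e : Fin S → Sym2 (Fin (2 * S)) := fun k => s(a k, b k)
  have hmeet : ∀ k l v, v ∈ e k → v ∈ e l → k = l := by
    intro k l v hk hl
    simp only [e, Sym2.mem_iff, a, b, Fin.ext_iff] at hk hl
    rw [Fin.ext_iff]
    omega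
  have hinj : Function.Injective e := by
    intro k l hkl
    exact hmeet k l (a k) (by simp [e]) (by rw [← hkl]; simp [e])
  have : Nonempty (Fin t) := ⟨⟨0, ht⟩⟩
  have hex : ∃ j, r j ≤ (univ.filter (fun k => c (e k) = j)).card := by
    by_contra hcon
    push Not at hcon
    have h1 : ∑ j, (univ.filter (fun k => c (e k) = j)).card < ∑ j, r j :=
      sum_lt_sum_of_nonempty univ_nonempty fun j _ => hcon j
    have h2 : (univ : Finset (Fin S)).card = ∑ j, (univ.filter (fun k => c (e k) = j)).card :=
      card_eq_sum_card_fiberwise (fun x _ => mem_coe.2 (mem_univ _))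
    rw [card_univ, Fintype.card_fin] at h2
    omega
  obtain ⟨j, hj⟩ := hex
  obtain ⟨A, hA, hAc⟩ := exists_subset_card_eq hj
  refine ⟨j, A.image e, by rw [card_image_of_injective _ hinj, hAc], ⟨?_, ?_⟩, ?_⟩
  · intro x hx
    obtain ⟨k, -, rfl⟩ := mem_image.1 hx
    simp [e, a, b]
  · intro x hx y hy hne v hvx hvy
    obtain ⟨k, -, rfl⟩ := mem_image.1 hx
    obtain ⟨l, -, rfl⟩ := mem_image.1 hy
    exact hne (by rw [hmeet k l v hvx hvy])
  · intro x hx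
    obtain ⟨k, hk, rfl⟩ := mem_image.1 hx
    exact (mem_filter.1 (hA hk)).2

theorem ramsey_lower (hr : ∀ i, 1 ≤ r i) {N : ℕ}
    (hN : ∀ c : Sym2 (Fin N) → Fin t, ColoringHasMatching N t r c) (i : Fin t) :
    r i + 1 + ∑ j, (r j - 1) ≤ N := by
  classical
  by_contra hcon
  let s : Fin t → ℕ := fun j => (r j - 1) + (if j = i then r i else 0)
  have hs : ∑ j, s j = ∑ j, (r j - 1) + r i := by
    simp [s, sum_add_distrib]
  have hemb : Nonempty (Fin N ↪ Σ j, Fin (s j)) := by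
    apply Function.Embedding.nonempty_of_card_le
    simp only [Fintype.card_fin, Fintype.card_sigma]
    omega
  obtain ⟨φ⟩ := hemb
  let lam : Fin N → Fin t := fun v => (φ v).1
  have hfib : ∀ j, (univ.filter (fun v => lam v = j)).card ≤ s j := by
    intro j
    have h1 : (univ.filter (fun v => lam v = j)).card ≤
        ((univ : Finset (Fin (s j))).map (Function.Embedding.sigmaMk (β := fun j => Fin (s j)) j)).card := by
      apply card_le_card_of_injOn φ
      · intro v hv
        have hv := (mem_filter.1 (mem_coe.1 hv)).2
        simp only [lam] at hv
        generalize φ v = y at hv ⊢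
        obtain ⟨j', x⟩ := y
        simp only at hv
        subst hv
        simp
      · exact φ.injective.injOn
    simpa using h1
  let c : Sym2 (Fin N) → Fin t := fun e =>
    if hh : ∃ v ∈ e, lam v ≠ i then lam hh.choose else i
  have hc1 : ∀ e j, c e = j → j ≠ i → ∃ v ∈ e, lam v = j := by
    intro e j he hj
    by_cases hh : ∃ v ∈ e, lam v ≠ i
    · simp only [c, dif_pos hh] at he
      exact ⟨hh.choose, hh.choose_spec.1, he⟩
    · simp only [c, dif_neg hh] at he
      exact absurd he.symm hj
  have hc2 : ∀ e, c e = i → ∀ v ∈ e, lam v = i := by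
    intro e he
    by_contra hcon
    have hh : ∃ v ∈ e, lam v ≠ i := by
      push Not at hcon
      exact hcon
    simp only [c, dif_pos hh] at he
    exact hh.choose_spec.2 he
  obtain ⟨j, M, hMc, ⟨hMd, hMp⟩, hM⟩ := hN c
  have hrj := hr j
  have hfj := hfib j
  by_cases hj : j = i
  · subst hj
    have h1 : (M.biUnion Sym2.toFinset).card = ∑ e ∈ M, e.toFinset.card := by
      apply Finset.card_biUnion
      intro x hx y hy hne
      change Disjoint x.toFinset y.toFinset
      rw [disjoint_left]
      intro v hv hv'
      rw [Sym2.mem_toFinset] at hv hv'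
      exact hMp hx hy hne v hv hv'
    have h2 : ∑ e ∈ M, e.toFinset.card = ∑ e ∈ M, 2 :=
      sum_congr rfl fun e he => Sym2.card_toFinset_of_not_isDiag e (hMd e he)
    have h3 : (M.biUnion Sym2.toFinset).card ≤ (univ.filter (fun v => lam v = j)).card := by
      apply card_le_card
      intro v hv
      obtain ⟨e, he, hve⟩ := mem_biUnion.1 hv
      rw [Sym2.mem_toFinset] at hve
      exact mem_filter.2 ⟨mem_univ _, hc2 e (hM e he) v hve⟩
    rw [h1, h2, sum_const, smul_eq_mul, hMc] at h3
    simp only [s, if_true] at hfj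
    omega
  · have hch : ∀ e ∈ M, ∃ v ∈ e, lam v = j := fun e he => hc1 e j (hM e he) hj
    obtain ⟨e0, he0⟩ : M.Nonempty := by
      rw [← card_pos]; omega
    obtain ⟨v0, -, -⟩ := hch e0 he0
    have : Nonempty (Fin N) := ⟨v0⟩
    choose! g hg1 hg2 using hch
    have h3 : M.card ≤ (univ.filter (fun v => lam v = j)).card := by
      apply card_le_card_of_injOn g
      · intro e he
        exact mem_coe.2 (mem_filter.2 ⟨mem_univ _, hg2 e he⟩)
      · intro e he e' he' hee
        by_contra hne
        exact hMp he he' hne (g e) (hg1 e he) (hee ▸ hg1 e' he')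
    simp only [s, if_neg hj] at hfj
    omega

theorem le_of_ramsey_le (hr : ∀ i, 1 ≤ r i) {n : ℕ} (hn : matchingRamsey t r ≤ n) (i : Fin t) :
    r i + 1 + ∑ j, (r j - 1) ≤ n :=
  (ramsey_lower hr (Nat.sInf_mem (ramsey_set_nonempty (r := r) i.pos)) i).trans hn

end ramsey
/-! ### Numerical estimates -/

section numeric

/-- The constant of the theorem. -/
noncomputable def rhoC (t : ℕ) : ℝ :=
  (2 * (t : ℝ) - 1 + ((t : ℝ) - 3) * Real.logb 2 ((t : ℝ) - 2)) / ((t : ℝ) + 1)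

theorem one_le_rhoC {t : ℕ} (ht : 2 ≤ t) : 1 ≤ rhoC t := by
  unfold rhoC
  rcases Nat.lt_or_ge t 3 with h | h
  · have : t = 2 := by omega
    subst this
    norm_num
  · have h3 : (3 : ℝ) ≤ t := by exact_mod_cast h
    rw [le_div_iff₀ (by linarith)]
    have := mul_nonneg (sub_nonneg.2 h3)
      (Real.logb_nonneg (b := 2) (by norm_num) (by linarith : (1 : ℝ) ≤ (t : ℝ) - 2))
    linarith

theorem rhoC_mono {s t : ℕ} (hs : 2 ≤ s) (hst : s ≤ t) : rhoC s ≤ rhoC t := by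
  rcases Nat.lt_or_ge s 3 with h | h
  · have : s = 2 := by omega
    subst this
    have h2 : rhoC 2 = 1 := by
      unfold rhoC
      norm_num
    rw [h2]
    exact one_le_rhoC hst
  · have h3 : (3 : ℝ) ≤ s := by exact_mod_cast h
    have h4 : (s : ℝ) ≤ t := by exact_mod_cast hst
    have e : ∀ x : ℝ, 3 ≤ x → (2 * x - 1 + (x - 3) * Real.logb 2 (x - 2)) / (x + 1) =
        2 - 3 / (x + 1) + (1 - 4 / (x + 1)) * Real.logb 2 (x - 2) := by
      intro x hx
      have : x + 1 ≠ 0 := by linarith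
      field_simp
      ring
    unfold rhoC
    rw [e _ h3, e _ (h3.trans h4)]
    have l1 : 0 ≤ Real.logb 2 ((s : ℝ) - 2) := Real.logb_nonneg (by norm_num) (by linarith)
    have l2 : Real.logb 2 ((s : ℝ) - 2) ≤ Real.logb 2 ((t : ℝ) - 2) :=
      Real.logb_le_logb_of_le (by norm_num) (by linarith) (by linarith)
    have d : 1 / ((t : ℝ) + 1) ≤ 1 / ((s : ℝ) + 1) :=
      one_div_le_one_div_of_le (by linarith) (by linarith)
    have d4 : 1 / ((s : ℝ) + 1) ≤ 1 / 4 :=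
      one_div_le_one_div_of_le (by norm_num) (by linarith)
    have a1 : ∀ c x : ℝ, c / x = c * (1 / x) := fun c x => by ring
    rw [a1 3, a1 4, a1 3 ((t : ℝ) + 1), a1 4 ((t : ℝ) + 1)]
    have := mul_le_mul (by linarith : 1 - 4 * (1 / ((s : ℝ) + 1)) ≤ 1 - 4 * (1 / ((t : ℝ) + 1))) l2
      l1 (by linarith)
    linarith

theorem pow_bound (M : ℕ) (hM : 5 ≤ M) : (M + 1) ^ 4 ≤ 2 ^ (2 * M + 1) := by
  induction M, hM using Nat.le_induction with
  | base => norm_num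
  | succ M hM ih =>
    have h1 : (M + 1 + 1) ^ 2 ≤ 2 * (M + 1) ^ 2 := by nlinarith
    calc (M + 1 + 1) ^ 4 = ((M + 1 + 1) ^ 2) ^ 2 := by ring
      _ ≤ (2 * (M + 1) ^ 2) ^ 2 := Nat.pow_le_pow_left h1 2
      _ = 4 * (M + 1) ^ 4 := by ring
      _ ≤ 4 * 2 ^ (2 * M + 1) := by omega
      _ = 2 ^ (2 * (M + 1) + 1) := by ring

theorem logb_le_of_pow (x : ℕ) (hx : 0 < x) (a b : ℕ) (h : x ^ a ≤ 2 ^ b) :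
    (a : ℝ) * Real.logb 2 x ≤ b := by
  have h1 : ((x : ℝ) ^ a) ≤ 2 ^ b := by exact_mod_cast h
  have hx' : (0 : ℝ) < x := by exact_mod_cast hx
  have h2 := Real.logb_le_logb_of_le (b := 2) (by norm_num) (by positivity) h1
  rw [Real.logb_pow, Real.logb_pow, Real.logb_self_eq_one (by norm_num)] at h2
  linarith

theorem logb_step (M : ℕ) (hM : 1 ≤ M) :
    ((M : ℝ) - 1) * (Real.logb 2 ((M : ℝ) + 1) - Real.logb 2 M) ≤ 2 := by
  have hM' : (1 : ℝ) ≤ M := by exact_mod_cast hM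
  have hl2 := Real.log_two_gt_d9
  have h1 : Real.log ((M : ℝ) + 1) - Real.log M ≤ 1 / M := by
    rw [← Real.log_div (by linarith) (by linarith)]
    refine (Real.log_le_sub_one_of_pos (by positivity)).trans (le_of_eq ?_)
    field_simp
    ring
  have h2 : Real.logb 2 ((M : ℝ) + 1) - Real.logb 2 M ≤ 2 / M := by
    unfold Real.logb
    rw [← sub_div, div_le_iff₀ (by linarith)]
    refine h1.trans ?_
    rw [div_mul_eq_mul_div]
    gcongr
    linarith
  calc ((M : ℝ) - 1) * (Real.logb 2 ((M : ℝ) + 1) - Real.logb 2 M) ≤ ((M : ℝ) - 1) * (2 / M) :=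
        mul_le_mul_of_nonneg_left h2 (by linarith)
    _ ≤ 2 := by
      rw [mul_div_assoc', div_le_iff₀ (by linarith)]
      linarith

theorem logb_key (M : ℕ) : ((M : ℝ) + 3) * Real.logb 2 ((M : ℝ) + 1) ≤
    2 * M + 3 + ((M : ℝ) - 1) * Real.logb 2 M := by
  have l2 : Real.logb 2 2 = 1 := Real.logb_self_eq_one (by norm_num)
  have l4 : Real.logb 2 4 = 2 := by
    rw [show (4 : ℝ) = 2 ^ 2 by norm_num, Real.logb_pow, l2]
    norm_num
  rcases Nat.lt_or_ge M 5 with h | h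
  · interval_cases M
    · norm_num
    · norm_num [l2]
    · have := logb_le_of_pow 3 (by norm_num) 5 8 (by norm_num)
      norm_num [l2] at this ⊢
      linarith
    · have : (3 : ℝ) / 2 ≤ Real.logb 2 3 := by
        have h1 := Real.logb_le_logb_of_le (b := 2) (by norm_num) (by norm_num)
          (by norm_num : (2 : ℝ) ^ 3 ≤ 3 ^ 2)
        rw [Real.logb_pow, Real.logb_pow, l2] at h1
        norm_num at h1
        linarith
      norm_num [l4]
      linarith
    · have := logb_le_of_pow 5 (by norm_num) 7 17 (by norm_num)
      norm_num [l4] at this ⊢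
      linarith
  · have h1 := logb_le_of_pow (M + 1) (by omega) 4 (2 * M + 1) (pow_bound M h)
    have h2 := logb_step M (by omega)
    push_cast at h1
    linarith

theorem sum_logb_shift (M k : ℕ) : ∑ j ∈ range M, Real.logb 2 ((j : ℝ) + 1 + k) ≤
    ∑ j ∈ range M, Real.logb 2 ((j : ℝ) + 1) + k * Real.logb 2 ((M : ℝ) + 1) := by
  induction k with
  | zero => simp
  | succ k ih =>
    have h1 : ∑ j ∈ range M, Real.logb 2 ((j : ℝ) + 1 + (k + 1 : ℕ)) -
        ∑ j ∈ range M, Real.logb 2 ((j : ℝ) + 1 + k) =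
        Real.logb 2 ((M : ℝ) + 1 + k) - Real.logb 2 (1 + k) := by
      have := Finset.sum_range_sub (fun j : ℕ => Real.logb 2 ((j : ℝ) + 1 + k)) M
      rw [← sum_sub_distrib]
      simp only [Nat.cast_zero, zero_add] at this
      rw [← this]
      apply sum_congr rfl
      intro j _
      congr 2
      push_cast
      ring
    have h2 : Real.logb 2 ((M : ℝ) + 1 + k) ≤ Real.logb 2 ((M : ℝ) + 1) + Real.logb 2 (1 + k) := by
      rw [← Real.logb_mul (by positivity) (by positivity)]
      apply Real.logb_le_logb_of_le (by norm_num) (by positivity)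
      have : (0 : ℝ) ≤ (M : ℝ) * k := by positivity
      nlinarith
    push_cast at h1 ⊢
    linarith

theorem sum_logb_le (M : ℕ) : ∑ j ∈ range M, Real.logb 2 ((j : ℝ) + 1) ≤
    ((M : ℝ) - 1) * Real.logb 2 M := by
  cases M with
  | zero => simp
  | succ M =>
    rw [sum_range_succ']
    have h1 : ∑ j ∈ range M, Real.logb 2 (((j + 1 : ℕ) : ℝ) + 1) ≤
        ∑ j ∈ range M, Real.logb 2 ((M : ℝ) + 1) := by
      apply sum_le_sum
      intro j hj
      have : ((j + 1 : ℕ) : ℝ) ≤ M := by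
        exact_mod_cast mem_range.1 hj
      exact Real.logb_le_logb_of_le (by norm_num) (by positivity) (by linarith)
    rw [sum_const, card_range, nsmul_eq_mul] at h1
    simp only [Nat.cast_zero, zero_add, Real.logb_one, add_zero]
    push_cast at h1 ⊢
    simpa using h1

theorem pieceCost_le (t m k : ℕ) (hk : k ≤ m) (ht : 2 ≤ t) (hm : m + 1 ≤ t) :
    (pieceCost m k : ℝ) ≤ rhoC t * (2 + m + k) := by
  cases m with
  | zero =>
    have : k = 0 := by omega
    subst this
    have := one_le_rhoC ht
    simp [pieceCost]
    linarith
  | succ M =>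
    have h1 : (pieceCost (M + 1) k : ℝ) ≤ 1 + 2 * (M + 1) +
        ∑ j ∈ range M, Real.logb 2 ((j : ℝ) + 1 + k) := by
      unfold pieceCost
      rw [sum_range_succ']
      push_cast
      have : ∑ j ∈ range M, ((2 : ℝ) + (Nat.log 2 (min (2 * (j + 1)) (j + 1 + k)) : ℝ)) ≤
          ∑ j ∈ range M, ((2 : ℝ) + Real.logb 2 ((j : ℝ) + 1 + k)) := by
        apply sum_le_sum
        intro j _
        have a1 : Nat.log 2 (min (2 * (j + 1)) (j + 1 + k)) ≤ Nat.log 2 (j + 1 + k) :=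
          Nat.log_mono_right (min_le_right _ _)
        have a2 : (Nat.log 2 (min (2 * (j + 1)) (j + 1 + k)) : ℝ) ≤ (Nat.log 2 (j + 1 + k) : ℝ) := by
          exact_mod_cast a1
        have a3 := Real.natLog_le_logb (j + 1 + k) 2
        push_cast at a3
        linarith
      rw [sum_add_distrib (g := fun j : ℕ => Real.logb 2 ((j : ℝ) + 1 + k)), sum_const, card_range,
        nsmul_eq_mul] at this
      simp only [mul_zero, zero_add, Nat.zero_min, Nat.log_zero_right, Nat.cast_zero]
      linarith
    have h2 := sum_logb_shift M k
    have h3 := sum_logb_le M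
    have h4 := logb_key M
    have h5 : rhoC (M + 2) ≤ rhoC t := rhoC_mono (by omega) (by omega)
    have h6 : rhoC (M + 2) * ((M : ℝ) + 3) = 2 * M + 3 + ((M : ℝ) - 1) * Real.logb 2 M := by
      unfold rhoC
      push_cast
      have e1 : (M : ℝ) + 2 - 2 = M := by ring
      have e2 : (M : ℝ) + 2 + 1 = M + 3 := by ring
      rw [e1, e2, div_mul_cancel₀ _ (by positivity)]
      ring
    have h7 : Real.logb 2 ((M : ℝ) + 1) ≤ rhoC (M + 2) := by
      have : ((M : ℝ) + 3) * Real.logb 2 ((M : ℝ) + 1) ≤ ((M : ℝ) + 3) * rhoC (M + 2) := by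
        linarith
      exact le_of_mul_le_mul_left this (by positivity)
    have h8 : (k : ℝ) * Real.logb 2 ((M : ℝ) + 1) ≤ k * rhoC (M + 2) :=
      mul_le_mul_of_nonneg_left h7 (by positivity)
    have h9 : rhoC (M + 2) * ((M : ℝ) + 3 + k) ≤ rhoC t * ((M : ℝ) + 3 + k) :=
      mul_le_mul_of_nonneg_right h5 (by positivity)
    push_cast
    linarith

end numeric

/-- Theorem (Briggs–Cox): if `t ≥ 2`, `rᵢ ≥ 1` and `n ≥ R(r₁K₂,…,r_tK₂)`, then
`R̃(r₁K₂,…,r_tK₂; n) ≤ ((2t − 1 + (t − 3)·log₂(t − 2)) / (t + 1)) · n`,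
with the convention `log₂ 0 = 0` (which holds for `Real.logb`). -/
theorem restrictedOnlineRamsey_upper_bound (t : ℕ) (ht : 2 ≤ t) (r : Fin t → ℕ)
    (hr : ∀ i, 1 ≤ r i) (n : ℕ) (hn : matchingRamsey t r ≤ n) :
    (restrictedOnlineRamsey n t r : ℝ) ≤
      (2 * (t : ℝ) - 1 + ((t : ℝ) - 3) * Real.logb 2 ((t : ℝ) - 2)) / ((t : ℝ) + 1) * n := by
  classical
  have i0 : Fin t := ⟨0, by omega⟩
  have hN := le_of_ramsey_le hr hn
  have hn0 : 0 < n := by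
    have := hN i0
    omega
  have hρ : 0 ≤ rhoC t := by
    have := one_le_rhoC ht
    linarith
  have hw : CanWin (n := n) r ⌊rhoC t * n⌋₊ [] := by
    refine PState.canWin hN (rhoC t) hρ (fun m k hk hm => pieceCost_le t m k hk ht hm)
      (fun x hx => Nat.le_floor hx) n [] ∅ i0 ⟨by simp, by simp, by simp, by simp⟩ (by simp)
  obtain ⟨k, hk, hB⟩ := hw.wins i0 ⟨0, hn0⟩
  have h1 : restrictedOnlineRamsey n t r ≤ k := Nat.sInf_le hB
  have h2 : (restrictedOnlineRamsey n t r : ℝ) ≤ (⌊rhoC t * n⌋₊ : ℝ) := by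
    exact_mod_cast h1.trans hk
  exact h2.trans (Nat.floor_le (by positivity))
end
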